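/- Let G be a connected vertex-transitive non-bipartite triangle-free simple graph of degree 5 and even order that is not 4-factor-critical, and suppose λ₅(G) = λ₆(G) = 13. Then every λ₆-atom S of G satisfies |S| ≥ 11. -/

import Mathlib

open SimpleGraph

section Defs

variable {V : Type*}

/-- A simple graph is vertex-transitive if any vertex can be mapped to any other
by a graph automorphism. -/
def VertexTransitive (G : SimpleGraph V) : Prop :=
  ∀ x y : V, ∃ φ : G ≃g G, φ x = y

/-- A graph is `p`-factor-critical if the removal of any set of `p` vertices
results in a graph with a perfect matching. -/
def PFactorCritical (G : SimpleGraph V) (p : ℕ) : Prop :=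
  ∀ X : Set V, X.ncard = p → ∃ M : (G.induce Xᶜ).Subgraph, M.IsPerfectMatching

/-- A graph is factor-critical if the removal of any single vertex results in a
graph with a perfect matching. -/
def IsFactorCritical {W : Type*} (H : SimpleGraph W) : Prop :=
  ∀ v : W, ∃ M : (H.induce ({v}ᶜ : Set W)).Subgraph, M.IsPerfectMatching

/-- `∇(X)`: the set of edges of `G` with exactly one end in `X`. -/
def edgeBoundary (G : SimpleGraph V) (X : Set V) : Set (Sym2 V) :=
  {e | e ∈ G.edgeSet ∧ ∃ x ∈ X, ∃ y ∈ Xᶜ, e = s(x, y)}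

/-- The set of edges of `G` with both ends in `X`. -/
def edgesWithin (G : SimpleGraph V) (X : Set V) : Set (Sym2 V) :=
  {e | e ∈ G.edgeSet ∧ ∀ v ∈ e, v ∈ X}

/-- The set of edges of `G` with one end in `A` and the other end in `S \ A`
(i.e. the edge boundary of `A` inside the induced subgraph `G[S]` when `A ⊆ S`). -/
def inducedEdgeBoundary (G : SimpleGraph V) (S A : Set V) : Set (Sym2 V) :=
  {e | e ∈ G.edgeSet ∧ ∃ x ∈ A, ∃ y ∈ S \ A, e = s(x, y)}

/-- `F` is an `s`-restricted edge-cut of `G` if deleting `F` disconnects `G` and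
every component of `G − F` has at least `s` vertices. -/
def IsRestrictedEdgeCut (G : SimpleGraph V) (s : ℕ) (F : Set (Sym2 V)) : Prop :=
  F ⊆ G.edgeSet ∧ ¬ (G.deleteEdges F).Connected ∧
    ∀ c : (G.deleteEdges F).ConnectedComponent, s ≤ c.supp.ncard

/-- `λ_s(G)`: the minimum cardinality of an `s`-restricted edge-cut of `G`. -/
noncomputable def lambdaS (G : SimpleGraph V) (s : ℕ) : ℕ :=
  sInf (Set.ncard '' {F | IsRestrictedEdgeCut G s F})

/-- A `λ_s`-fragment: a vertex set whose edge boundary is an `s`-restricted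
edge-cut of minimum cardinality `λ_s(G)`. -/
def IsLambdaFragment (G : SimpleGraph V) (s : ℕ) (X : Set V) : Prop :=
  IsRestrictedEdgeCut G s (edgeBoundary G X) ∧ (edgeBoundary G X).ncard = lambdaS G s

/-- A `λ_s`-atom: a `λ_s`-fragment of minimum cardinality. -/
def IsLambdaAtom (G : SimpleGraph V) (s : ℕ) (X : Set V) : Prop :=
  IsLambdaFragment G s X ∧ ∀ Y : Set V, IsLambdaFragment G s Y → X.ncard ≤ Y.ncard

/-- The odd girth of `G`: the length of a shortest odd cycle of `G`. -/
noncomputable def oddGirth (G : SimpleGraph V) : ℕ :=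
  sInf {n | Odd n ∧ ∃ (v : V) (c : G.Walk v v), c.IsCycle ∧ c.length = n}

/-- `X` is an independent set of `G`. -/
def IsIndependentSet (G : SimpleGraph V) (X : Set V) : Prop :=
  ∀ x ∈ X, ∀ y ∈ X, ¬ G.Adj x y

/-- The independence number `α(G)`. -/
noncomputable def indepNum (G : SimpleGraph V) : ℕ :=
  sSup {n | ∃ X : Set V, IsIndependentSet G X ∧ X.ncard = n}

/-- The number of trivial (single-vertex) components of `G − X`. -/
noncomputable def trivialComponentCount (G : SimpleGraph V) (X : Set V) : ℕ :=
  {c : (G.induce Xᶜ).ConnectedComponent | c.supp.ncard = 1}.ncard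

/-- The number of odd components of `G − X`. -/
noncomputable def oddComponentCount (G : SimpleGraph V) (X : Set V) : ℕ :=
  {c : (G.induce Xᶜ).ConnectedComponent | Odd c.supp.ncard}.ncard

/-- The number of nontrivial components of `G − X`. -/
noncomputable def nontrivialComponentCount (G : SimpleGraph V) (X : Set V) : ℕ :=
  {c : (G.induce Xᶜ).ConnectedComponent | 2 ≤ c.supp.ncard}.ncard

/-- An imprimitive block of `G`: a proper non-empty vertex set that every
automorphism either fixes setwise or maps to a disjoint set. -/
def IsImprimitiveBlock (G : SimpleGraph V) (X : Set V) : Prop :=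
  X.Nonempty ∧ X ≠ Set.univ ∧ ∀ φ : G ≃g G, (⇑φ) '' X = X ∨ ((⇑φ) '' X) ∩ X = ∅

/-- A connected graph is `q`-extendable if it has a perfect matching and every
matching of size `q` is contained in a perfect matching. -/
def Extendable (G : SimpleGraph V) (q : ℕ) : Prop :=
  (∃ M : G.Subgraph, M.IsPerfectMatching) ∧
    ∀ M : G.Subgraph, M.IsMatching → M.edgeSet.ncard = q →
      ∃ P : G.Subgraph, P.IsPerfectMatching ∧ M ≤ P

end Defs


/-- number of common `true` positions -/
noncomputable def dotc (l : List Bool) : List Bool → ℕ :=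
  List.rec (fun _ => 0) (fun a _ ih bs =>
    List.casesOn bs 0 (fun b bs => cond a (cond b (Nat.add (ih bs) 1) (ih bs)) (ih bs))) l

/-- number of `true` entries -/
noncomputable def cntc (l : List Bool) : ℕ :=
  List.rec 0 (fun a _ ih => cond a (Nat.add ih 1) ih) l

/-- twice the number of edges inside the vertex set `k` -/
noncomputable def eec (rows : List (List Bool)) (k : List Bool) : List Bool → ℕ :=
  List.rec (fun _ => 0) (fun r _ ih bs =>
    List.casesOn bs 0 (fun b bs => cond b (Nat.add (dotc r k) (ih bs)) (ih bs))) rows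

/-- test `p` on all Boolean lists of length `n` with `k` entries `true` -/
noncomputable def combos (n : ℕ) : ℕ → (List Bool → Bool) → Bool :=
  Nat.rec (fun k p => Nat.casesOn k (p []) (fun _ => true))
    (fun _ ih k p => Nat.casesOn k (ih 0 (fun l => p (false :: l)))
      (fun k' => and (ih k' (fun l => p (true :: l))) (ih (Nat.succ k') (fun l => p (false :: l))))) n

/-- all members of `k` of degree two inside `k` have degree at least four -/
noncomputable def fullc (rows : List (List Bool)) (k : List Bool) : List Bool → Bool :=
  List.rec (fun _ => true) (fun r _ ih bs =>
    List.casesOn bs true (fun b bs =>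
      and (or (not b) (or (not (Nat.beq (dotc r k) 2)) (Nat.ble 4 (cntc r)))) (ih bs))) rows

/-- some member of `k` of degree two inside `k` has degree at least four -/
noncomputable def somec (rows : List (List Bool)) (k : List Bool) : List Bool → Bool :=
  List.rec (fun _ => false) (fun r _ ih bs =>
    List.casesOn bs false (fun b bs =>
      or (and b (and (Nat.beq (dotc r k) 2) (Nat.ble 4 (cntc r)))) (ih bs))) rows

/-- indicator of vertices of degree at least four -/
noncomputable def bigc (rows : List (List Bool)) : List Bool :=
  rows.map (fun r => Nat.ble 4 (cntc r))

/-- first alternative of the claim, for one set `k` -/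
noncomputable def claimN (rows : List (List Bool)) (h y : ℕ) (k : List Bool) : Bool :=
  and (or (not (k.getD h false)) (fullc rows k k))
    (or (k.getD y false) (not (Nat.beq (dotc (rows.getD y []) (k.map not)) 3)))

/-- second alternative of the claim, for one set `k` -/
noncomputable def claimH (rows : List (List Bool)) (h y : ℕ) (k : List Bool) : Bool :=
  and (k.getD h false)
    (and (or (not (Nat.beq (dotc (rows.getD h []) k) 3)) (fullc rows k k))
      (or (not (k.getD y false)) (or (Nat.beq (dotc (rows.getD h []) k) 3)
             (Nat.beq (dotc (rows.getD y []) k) 3))))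

/-- test all 5-subsets spanning six edges -/
noncomputable def all5 (rows : List (List Bool)) (P : List Bool → Bool) : Bool :=
  combos 9 5 (fun k => or (not (Nat.beq (eec rows k k) 12)) (and (somec rows k k) (P k)))

/-- the claim for fixed special vertices -/
noncomputable def claimHY (rows : List (List Bool)) (h y : ℕ) : Bool :=
  and (and (Nat.beq (cntc (rows.getD h [])) 4) (Nat.beq (cntc (rows.getD y [])) 4))
   (and (not (Nat.beq (dotc (rows.getD h []) (bigc rows)) (dotc (rows.getD y []) (bigc rows))))
    (cond (Nat.beq (dotc (rows.getD h []) (bigc rows)) 0) (all5 rows (claimN rows h y))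
      (and ((rows.getD h []).getD y false) (all5 rows (claimH rows h y)))))

/-- the indices -/
def idx : List ℕ := [0, 1, 2, 3, 4, 5, 6, 7, 8]

/-- the full claim -/
noncomputable def claimc (rows : List (List Bool)) : Bool :=
  idx.any (fun h => and (or (Nat.beq (dotc (rows.getD h []) (bigc rows)) 0)
    (Nat.beq (dotc (rows.getD h []) (bigc rows)) 4)) (idx.any (fun y => claimHY rows h y)))

/-- attachment of an outer vertex to the `K_{2,3}` -/
structure Att where
  p : Bool
  q : Bool
  x : Bool
  y : Bool
  z : Bool

/-- disjoint attachments -/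
def Att.dis (a b : Att) : Bool :=
  not (or (and a.p b.p) (or (and a.q b.q) (or (and a.x b.x) (or (and a.y b.y) (and a.z b.z)))))

/-- attachments with one edge -/
def atts1 : List Att :=
  [⟨true, false, false, false, false⟩, ⟨false, true, false, false, false⟩,
   ⟨false, false, true, false, false⟩, ⟨false, false, false, true, false⟩,
   ⟨false, false, false, false, true⟩]

/-- attachments with two edges -/
def atts2 : List Att :=
  [⟨true, true, false, false, false⟩, ⟨false, false, true, true, false⟩,
   ⟨false, false, true, false, true⟩, ⟨false, false, false, true, true⟩]

/-- implication -/
def imp (a b : Bool) : Bool := cond a b true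

/-- adjacency matrix -/
def rowsc (a b c d : Att) (e12 e13 e14 e23 e24 e34 : Bool) : List (List Bool) :=
  [[false, false, true, true, true, a.p, b.p, c.p, d.p],
   [false, false, true, true, true, a.q, b.q, c.q, d.q],
   [true, true, false, false, false, a.x, b.x, c.x, d.x],
   [true, true, false, false, false, a.y, b.y, c.y, d.y],
   [true, true, false, false, false, a.z, b.z, c.z, d.z],
   [a.p, a.q, a.x, a.y, a.z, false, e12, e13, e14],
   [b.p, b.q, b.x, b.y, b.z, e12, false, e23, e24],
   [c.p, c.q, c.x, c.y, c.z, e13, e23, false, e34],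
   [d.p, d.q, d.x, d.y, d.z, e14, e24, e34, false]]

/-- numerical conditions on the adjacency matrix -/
noncomputable def condc (rows : List (List Bool)) : Bool :=
  and (rows.all (fun r => Nat.ble 3 (cntc r)))
    (combos 9 6 (fun k => Nat.ble (eec rows k k) 17))

/-- the test of one matrix -/
noncomputable def testc (rows : List (List Bool)) : Bool := imp (condc rows) (claimc rows)

/-- the search, star case -/
noncomputable def search1 : Bool :=
  atts1.all fun d => atts2.all fun a => imp (a.dis d) <| atts2.all fun b => imp (b.dis d) <|
  atts2.all fun c => imp (c.dis d) <| testc (rowsc a b c d false false true false true true)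

/-- the search, four-cycle case -/
noncomputable def search2 : Bool :=
  atts2.all fun a => atts2.all fun b => atts1.all fun c => imp (a.dis c) <| imp (b.dis c) <|
  atts1.all fun d => imp (a.dis d) <| imp (b.dis d) <|
  testc (rowsc a b c d false true true true true false)

theorem search1_true : search1 = true := by decide +kernel

theorem search2_true : search2 = true := by decide +kernel

set_option linter.unusedSectionVars false

section FinsetCounting

variable {V : Type*} [Fintype V] [DecidableEq V] (G : SimpleGraph V) [DecidableRel G.Adj]

/-- number of neighbours of `v` in `X` -/
def dg (X : Finset V) (v : V) : ℕ := ∑ u ∈ X, if G.Adj v u then 1 else 0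

/-- number of ordered adjacent pairs in `A × B` -/
def ee (A B : Finset V) : ℕ := ∑ a ∈ A, dg G B a

/-- size of the edge boundary -/
def dd (X : Finset V) : ℕ := ee G X Xᶜ

lemma dg_eq_card (X : Finset V) (v : V) : dg G X v = (X.filter (fun u => G.Adj v u)).card := by
  rw [dg, Finset.card_filter]

lemma dg_union {A B : Finset V} (h : Disjoint A B) (v : V) :
    dg G (A ∪ B) v = dg G A v + dg G B v := Finset.sum_union h

lemma ee_union_left {A B : Finset V} (h : Disjoint A B) (C : Finset V) :
    ee G (A ∪ B) C = ee G A C + ee G B C := Finset.sum_union h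

lemma ee_comm (A B : Finset V) : ee G A B = ee G B A := by
  unfold ee dg
  rw [Finset.sum_comm]
  simp only [G.adj_comm]

lemma ee_union_right {A B : Finset V} (h : Disjoint A B) (C : Finset V) :
    ee G C (A ∪ B) = ee G C A + ee G C B := by
  rw [ee_comm, ee_union_left G h, ee_comm G A, ee_comm G B]

lemma dg_mono {A B : Finset V} (h : A ⊆ B) (v : V) : dg G A v ≤ dg G B v :=
  Finset.sum_le_sum_of_subset h

variable {G} in
lemma dg_univ (hreg : G.IsRegularOfDegree 5) (v : V) : dg G Finset.univ v = 5 := by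
  rw [dg_eq_card, ← hreg v, ← G.card_neighborFinset_eq_degree]
  congr 1
  ext u; simp

lemma dd_compl (X : Finset V) : dd G Xᶜ = dd G X := by
  unfold dd; rw [compl_compl, ee_comm]

variable {G} in
lemma dd_add (hreg : G.IsRegularOfDegree 5) (X : Finset V) : dd G X + ee G X X = 5 * X.card := by
  unfold dd
  rw [← ee_union_right G (disjoint_compl_left)]
  have : Xᶜ ∪ X = Finset.univ := by rw [Finset.union_comm]; exact Finset.union_compl X
  rw [this]
  unfold ee
  simp [dg_univ hreg, mul_comm]

lemma dg_self_le {C : Finset V} {a : V} (ha : a ∈ C) : dg G C a ≤ C.card - 1 := by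
  rw [dg_eq_card, ← Finset.card_erase_of_mem ha]
  apply Finset.card_le_card
  intro u hu
  simp only [Finset.mem_filter] at hu
  exact Finset.mem_erase.2 ⟨hu.2.ne', hu.1⟩

lemma ee_self_le (C : Finset V) : ee G C C ≤ C.card * (C.card - 1) := by
  unfold ee
  calc _ ≤ ∑ a ∈ C, (C.card - 1) := Finset.sum_le_sum (fun a ha => dg_self_le G ha)
    _ = _ := by simp

lemma ee_insert {C : Finset V} {a : V} (ha : a ∉ C) :
    ee G (insert a C) (insert a C) = ee G C C + 2 * dg G C a := by
  have hd : Disjoint ({a} : Finset V) C := Finset.disjoint_singleton_left.2 ha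
  rw [Finset.insert_eq, ee_union_left G hd, ee_union_right G hd, ee_union_right G hd,
    ee_comm G C {a}]
  have h1 : ee G {a} {a} = 0 := by simp [ee, dg_eq_card, Finset.filter_singleton]
  have h2 : ee G {a} C = dg G C a := by simp [ee]
  omega

lemma ee_erase {C : Finset V} {a : V} (ha : a ∈ C) :
    ee G C C = ee G (C.erase a) (C.erase a) + 2 * dg G C a := by
  conv_lhs => rw [← Finset.insert_erase ha]
  rw [ee_insert G (Finset.notMem_erase a C)]
  have : dg G C a = dg G (C.erase a) a := by
    conv_lhs => rw [← Finset.insert_erase ha]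
    unfold dg
    rw [Finset.sum_insert (Finset.notMem_erase a C)]
    simp
  rw [this]

lemma ee_even (C : Finset V) : Even (ee G C C) := by
  induction C using Finset.induction_on with
  | empty => simp [ee]
  | insert a s ha ih =>
    rw [ee_insert G ha]
    exact ih.add (even_two_mul _)

/-- submodularity, both forms -/
lemma dd_submod (S T : Finset V) :
    dd G S + dd G T = dd G (S ∩ T) + dd G (S ∪ T) + 2 * ee G (S \ T) (T \ S) ∧
    dd G S + dd G T = dd G (S \ T) + dd G (T \ S) + 2 * ee G (S ∩ T) (S ∪ T)ᶜ := by
  set I := S ∩ T with hI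
  set P := S \ T with hP
  set Q := T \ S with hQ
  set R := (S ∪ T)ᶜ with hR
  have e1 : S = I ∪ P := by ext; simp [I, P]; tauto
  have e2 : T = I ∪ Q := by ext; simp [I, Q]; tauto
  have e3 : Sᶜ = Q ∪ R := by ext; simp [Q, R]; tauto
  have e4 : Tᶜ = P ∪ R := by ext; simp [P, R]; tauto
  have e5 : Iᶜ = P ∪ (Q ∪ R) := by ext; simp [I, P, Q, R]; tauto
  have e6 : S ∪ T = I ∪ (P ∪ Q) := by ext; simp [I, P, Q]; tauto
  have e7 : Pᶜ = I ∪ (Q ∪ R) := by ext; simp [I, P, Q, R]; tauto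
  have e8 : Qᶜ = I ∪ (P ∪ R) := by ext; simp [I, P, Q, R]; tauto
  have dIP : Disjoint I P := by
    rw [Finset.disjoint_left]; intro a; simp [I, P]; tauto
  have dIQ : Disjoint I Q := by
    rw [Finset.disjoint_left]; intro a; simp [I, Q]; tauto
  have dIR : Disjoint I R := by
    rw [Finset.disjoint_left]; intro a; simp [I, R]; tauto
  have dPQ : Disjoint P Q := by
    rw [Finset.disjoint_left]; intro a; simp [P, Q]; tauto
  have dPR : Disjoint P R := by
    rw [Finset.disjoint_left]; intro a; simp [P, R]; tauto
  have dQR : Disjoint Q R := by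
    rw [Finset.disjoint_left]; intro a; simp [Q, R]; tauto
  have a1 : dd G S = ee G I Q + ee G I R + ee G P Q + ee G P R := by
    unfold dd
    rw [e3, e1, ee_union_left G dIP, ee_union_right G dQR, ee_union_right G dQR]; ring
  have a2 : dd G T = ee G I P + ee G I R + ee G P Q + ee G Q R := by
    unfold dd
    rw [e4, e2, ee_union_left G dIQ, ee_union_right G dPR, ee_union_right G dPR,
      ee_comm G Q P]; ring
  have a3 : dd G I = ee G I P + ee G I Q + ee G I R := by
    unfold dd
    rw [e5, ee_union_right G (Finset.disjoint_union_right.2 ⟨dPQ, dPR⟩), ee_union_right G dQR]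
    ring
  have a4 : dd G (S ∪ T) = ee G I R + ee G P R + ee G Q R := by
    unfold dd
    rw [← hR, e6, ee_union_left G (Finset.disjoint_union_right.2 ⟨dIP, dIQ⟩),
      ee_union_left G dPQ]
    ring
  have a5 : dd G P = ee G I P + ee G P Q + ee G P R := by
    unfold dd
    rw [e7, ee_union_right G (Finset.disjoint_union_right.2 ⟨dIQ, dIR⟩), ee_union_right G dQR,
      ee_comm G P I]
    ring
  have a6 : dd G Q = ee G I Q + ee G P Q + ee G Q R := by
    unfold dd
    rw [e8, ee_union_right G (Finset.disjoint_union_right.2 ⟨dIP, dIR⟩), ee_union_right G dPR,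
      ee_comm G Q I, ee_comm G Q P]
    ring
  omega

lemma dd_split {X C : Finset V} (hC : C ⊆ X) (h0 : ee G C (X \ C) = 0) :
    dd G X = dd G C + dd G (X \ C) := by
  have h1 : Disjoint C (X \ C) := Finset.disjoint_sdiff
  have e1 : X = C ∪ (X \ C) := by rw [Finset.union_sdiff_of_subset hC]
  have e2 : Cᶜ = (X \ C) ∪ Xᶜ := by
    ext a; have := @hC a; simp; tauto
  have e3 : (X \ C)ᶜ = C ∪ Xᶜ := by
    ext a; have := @hC a; simp; tauto
  have d2 : Disjoint (X \ C) Xᶜ := by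
    rw [Finset.disjoint_left]; intro a; simp; tauto
  have d3 : Disjoint C Xᶜ := by
    rw [Finset.disjoint_left]; intro a ha; simp [hC ha]
  unfold dd
  rw [e2, e3, ee_union_right G d2, ee_union_right G d3, h0, ee_comm G (X \ C) C, h0]
  conv_lhs => rw [show ee G X Xᶜ = ee G (C ∪ (X \ C)) Xᶜ by rw [← e1]]
  rw [ee_union_left G h1]
  ring

lemma edgeBoundary_ncard (X : Finset V) : (edgeBoundary G (X : Set V)).ncard = dd G X := by
  have h1 : edgeBoundary G (X : Set V) =
      (fun z : V × V => s(z.1, z.2)) '' (((X ×ˢ Xᶜ).filter (fun z => G.Adj z.1 z.2) :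
        Finset (V × V)) : Set (V × V)) := by
    ext e
    simp only [edgeBoundary, Set.mem_ofPred_eq, Set.mem_image, Finset.coe_filter,
      Finset.mem_product, Finset.mem_compl, Set.mem_compl_iff, Finset.mem_coe, Prod.exists]
    constructor
    · rintro ⟨he, x, hx, y, hy, rfl⟩
      exact ⟨x, y, ⟨⟨hx, hy⟩, he⟩, rfl⟩
    · rintro ⟨x, y, ⟨⟨hx, hy⟩, he⟩, rfl⟩
      exact ⟨he, x, hx, y, hy, rfl⟩
  rw [h1, Set.ncard_image_of_injOn, Set.ncard_coe_finset, Finset.card_filter, Finset.sum_product]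
  · rfl
  · rintro ⟨a, b⟩ hab ⟨c, d⟩ hcd h
    simp only [Finset.coe_filter, Finset.mem_product, Finset.mem_compl, Set.mem_ofPred_eq] at hab hcd
    simp only [Sym2.eq_iff] at h
    rcases h with ⟨rfl, rfl⟩ | ⟨rfl, rfl⟩
    · rfl
    · exact absurd hab.1.1 hcd.1.2

lemma edgeBoundary_compl (X : Set V) : edgeBoundary G Xᶜ = edgeBoundary G X := by
  ext e
  simp only [edgeBoundary, Set.mem_ofPred_eq, compl_compl]
  constructor
  · rintro ⟨he, x, hx, y, hy, rfl⟩
    exact ⟨he, y, hy, x, hx, Sym2.eq_swap⟩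
  · rintro ⟨he, x, hx, y, hy, rfl⟩
    exact ⟨he, y, hy, x, hx, Sym2.eq_swap⟩

lemma adj_delete_mem {X : Set V} {u v : V}
    (h : (G.deleteEdges (edgeBoundary G X)).Adj u v) (hu : u ∈ X) : v ∈ X := by
  by_contra hv
  rw [SimpleGraph.deleteEdges_adj] at h
  exact h.2 ⟨h.1, u, hu, v, hv, rfl⟩

lemma reach_delete_mem {X : Set V} {u v : V}
    (h : (G.deleteEdges (edgeBoundary G X)).Reachable u v) (hu : u ∈ X) : v ∈ X := by
  obtain ⟨w⟩ := h
  induction w with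
  | nil => exact hu
  | cons hadj _ ih => exact ih (adj_delete_mem G hadj hu)

lemma comp_aux (X : Finset V) (s : ℕ)
    (hcomp : ∀ C : Finset V, C.Nonempty → C ⊆ X → ee G C (X \ C) = 0 → s ≤ C.card)
    {v : V} (hv : v ∈ X) :
    s ≤ ((G.deleteEdges (edgeBoundary G (X : Set V))).connectedComponentMk v).supp.ncard := by
  classical
  set H := G.deleteEdges (edgeBoundary G (X : Set V)) with hH
  set C : Finset V := (H.connectedComponentMk v).supp.toFinset with hC
  have hmem : ∀ u, u ∈ C ↔ H.Reachable u v := by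
    intro u; simp [C, SimpleGraph.ConnectedComponent.mem_supp_iff]
  rw [Set.ncard_eq_toFinset_card']
  apply hcomp
  · exact ⟨v, (hmem v).2 (SimpleGraph.Reachable.refl v)⟩
  · intro u hu
    exact reach_delete_mem G ((hmem u).1 hu).symm hv
  · unfold ee dg
    apply Finset.sum_eq_zero
    intro a ha
    apply Finset.sum_eq_zero
    intro b hb
    rw [if_neg]
    intro hab
    have haX : a ∈ X := by
      have := reach_delete_mem G ((hmem a).1 ha).symm hv
      exact this
    have hb' := Finset.mem_sdiff.1 hb
    apply hb'.2
    rw [hmem]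
    have hHab : H.Adj b a := by
      rw [hH, SimpleGraph.deleteEdges_adj]
      refine ⟨hab.symm, ?_⟩
      rintro ⟨_, x, hx, y, hy, hxy⟩
      rw [Sym2.eq_iff] at hxy
      rcases hxy with ⟨rfl, rfl⟩ | ⟨rfl, rfl⟩
      · exact hy haX
      · exact hy hb'.1
    exact hHab.reachable.trans ((hmem a).1 ha)

lemma restricted_of (X : Finset V) (s : ℕ) (hX : X.Nonempty) (hX' : Xᶜ.Nonempty)
    (h1 : ∀ C : Finset V, C.Nonempty → C ⊆ X → ee G C (X \ C) = 0 → s ≤ C.card)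
    (h2 : ∀ C : Finset V, C.Nonempty → C ⊆ Xᶜ → ee G C (Xᶜ \ C) = 0 → s ≤ C.card) :
    IsRestrictedEdgeCut G s (edgeBoundary G (X : Set V)) := by
  refine ⟨fun e he => he.1, ?_, ?_⟩
  · intro hc
    obtain ⟨a, ha⟩ := hX
    obtain ⟨b, hb⟩ := hX'
    have := reach_delete_mem G (hc.preconnected a b) ha
    exact (Finset.mem_compl.1 hb) this
  · intro c
    induction c using SimpleGraph.ConnectedComponent.ind with
    | h v =>
      by_cases hv : v ∈ X
      · exact comp_aux G X s h1 hv
      · have := comp_aux G Xᶜ s h2 (Finset.mem_compl.2 hv)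
        rwa [Finset.coe_compl, edgeBoundary_compl] at this

lemma lambda_le {s : ℕ} {F : Set (Sym2 V)} (h : IsRestrictedEdgeCut G s F) :
    lambdaS G s ≤ F.ncard := Nat.sInf_le ⟨F, h, rfl⟩

variable {G} in
lemma small_bound (hreg : G.IsRegularOfDegree 5) (C : Finset V) :
    5 * C.card ≤ dd G C + C.card * (C.card - 1) := by
  have := dd_add hreg C
  have := ee_self_le G C
  omega

variable {G} in
/-- every cut with both sides of size at least five has at least 13 edges -/
lemma cut_ge (hreg : G.IsRegularOfDegree 5) (h5 : lambdaS G 5 = 13) (n : ℕ) :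
    ∀ X : Finset V, dd G X = n → 5 ≤ X.card → 5 ≤ Xᶜ.card → 13 ≤ dd G X := by
  induction n using Nat.strong_induction_on with
  | _ n IH =>
    intro X hn hX hX'
    by_contra hlt
    have aux : ∀ Y : Finset V, dd G Y = n → 5 ≤ Y.card → 5 ≤ Yᶜ.card →
        ∀ C : Finset V, C.Nonempty → C ⊆ Y → ee G C (Y \ C) = 0 → 5 ≤ C.card := by
      intro Y hY hY5 hY5' C hC hCY h0
      by_contra hC5
      have hs := dd_split G hCY h0
      have hb := small_bound hreg C
      have hb' := small_bound hreg (Y \ C)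
      have hcard := Finset.card_sdiff_add_card_eq_card hCY
      have hpos := hC.card_pos
      by_cases hD : 5 ≤ (Y \ C).card
      · have hle : Yᶜ.card ≤ (Y \ C)ᶜ.card :=
          Finset.card_le_card (Finset.compl_subset_compl.2 Finset.sdiff_subset)
        have hCpos : 0 < dd G C := by
          generalize C.card = c at *
          interval_cases c <;> omega
        have := IH (dd G (Y \ C)) (by omega) (Y \ C) rfl hD (by omega)
        omega
      · generalize C.card = c at *
        generalize (Y \ C).card = d at *
        interval_cases c <;> interval_cases d <;> omega
    have hr : IsRestrictedEdgeCut G 5 (edgeBoundary G (X : Set V)) := by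
      apply restricted_of
      · rw [← Finset.card_pos]; omega
      · rw [← Finset.card_pos]; omega
      · exact aux X hn hX hX'
      · exact aux Xᶜ (by rw [dd_compl, hn]) hX' (by rwa [compl_compl])
    have := lambda_le G hr
    rw [edgeBoundary_ncard, h5] at this
    omega

variable {G} in
/-- cuts with 13 edges and both sides of size at least six are `6`-restricted -/
lemma frag_of (hreg : G.IsRegularOfDegree 5)
    (hcut : ∀ X : Finset V, 5 ≤ X.card → 5 ≤ Xᶜ.card → 13 ≤ dd G X)
    (h6 : lambdaS G 6 = 13)
    (X : Finset V) (hX : dd G X = 13) (h1 : 6 ≤ X.card) (h2 : 6 ≤ Xᶜ.card) :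
    IsLambdaFragment G 6 (X : Set V) := by
  have aux : ∀ Y : Finset V, dd G Y = 13 → 6 ≤ Y.card → 6 ≤ Yᶜ.card →
      ∀ C : Finset V, C.Nonempty → C ⊆ Y → ee G C (Y \ C) = 0 → 6 ≤ C.card := by
    intro Y hY hY5 hY5' C hC hCY h0
    by_contra hC5
    have hs := dd_split G hCY h0
    have hb := small_bound hreg C
    have hb' := small_bound hreg (Y \ C)
    have hcard := Finset.card_sdiff_add_card_eq_card hCY
    have hpos := hC.card_pos
    have hle : Yᶜ.card ≤ (Y \ C)ᶜ.card :=
      Finset.card_le_card (Finset.compl_subset_compl.2 Finset.sdiff_subset)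
    have hle' : Yᶜ.card ≤ Cᶜ.card :=
      Finset.card_le_card (Finset.compl_subset_compl.2 hCY)
    have hc1 := hcut C
    have hc2 := hcut (Y \ C)
    have hCpos : C.card < 5 → 0 < dd G C := by
      generalize C.card = c at *
      intro hc
      interval_cases c <;> omega
    have hDpos : (Y \ C).card < 5 → 0 < dd G (Y \ C) := by
      intro hc
      have : 0 < (Y \ C).card := by omega
      clear hc1 hc2
      generalize (Y \ C).card = c at *
      interval_cases c <;> omega
    by_cases hD : 5 ≤ (Y \ C).card
    · have := hc2 hD (by omega)
      by_cases hC' : C.card < 5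
      · have := hCpos hC'; omega
      · have := hc1 (by omega) (by omega); omega
    · by_cases hC' : C.card < 5
      · clear hc1 hc2 hCpos hDpos
        generalize C.card = c at *
        generalize (Y \ C).card = d at *
        interval_cases c <;> interval_cases d <;> omega
      · have := hc1 (by omega) (by omega)
        have := hDpos (by omega)
        omega
  refine ⟨?_, ?_⟩
  · apply restricted_of
    · rw [← Finset.card_pos]; omega
    · rw [← Finset.card_pos]; omega
    · exact aux X hX h1 h2
    · exact aux Xᶜ (by rw [dd_compl, hX]) h2 (by rwa [compl_compl])
  · rw [edgeBoundary_ncard, hX, h6]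

variable {G} in
lemma frag_card (hconn : G.Connected) (X : Finset V)
    (h : IsLambdaFragment G 6 (X : Set V)) : 6 ≤ X.card := by
  obtain ⟨⟨_, hnc, hc⟩, _⟩ := h
  have hne : X.Nonempty := by
    by_contra hX
    rw [Finset.not_nonempty_iff_eq_empty] at hX
    subst hX
    apply hnc
    have : edgeBoundary G ((∅ : Finset V) : Set V) = ∅ := by
      ext e; simp [edgeBoundary]
    rw [this, SimpleGraph.deleteEdges_empty]
    exact hconn
  obtain ⟨v, hv⟩ := hne
  refine (hc (SimpleGraph.connectedComponentMk _ v)).trans ?_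
  rw [← Set.ncard_coe_finset]
  apply Set.ncard_le_ncard _ (Finset.finite_toSet X)
  intro u hu
  rw [SimpleGraph.ConnectedComponent.mem_supp_iff, SimpleGraph.ConnectedComponent.eq] at hu
  exact reach_delete_mem G hu.symm hv

end FinsetCounting

section Structure

variable {V : Type*} [Fintype V] [DecidableEq V] {G : SimpleGraph V} [DecidableRel G.Adj]

lemma no_tri (htri : G.CliqueFree 3) {a b c : V} (h1 : G.Adj a b) (h2 : G.Adj a c)
    (h3 : G.Adj b c) : False := by
  apply htri {a, b, c}
  rw [SimpleGraph.is3Clique_triple_iff]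
  exact ⟨h1, h2, h3⟩

/-- minimum degree inside an odd set of vertices with 13 boundary edges -/
lemma dg_ge_three (hreg : G.IsRegularOfDegree 5)
    (hcut : ∀ X : Finset V, 5 ≤ X.card → 5 ≤ Xᶜ.card → 13 ≤ dd G X)
    {S : Finset V} (hS : dd G S = 13) (h6 : 6 ≤ S.card) (h5 : 5 ≤ Sᶜ.card)
    {v : V} (hv : v ∈ S) : 3 ≤ dg G S v := by
  have h1 := ee_erase G hv
  have h2 := dd_add hreg S
  have h3 := dd_add hreg (S.erase v)
  have h4 := Finset.card_erase_of_mem hv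
  have h7 : Sᶜ.card ≤ (S.erase v)ᶜ.card :=
    Finset.card_le_card (Finset.compl_subset_compl.2 (Finset.erase_subset _ _))
  have := hcut (S.erase v) (by omega) (by omega)
  omega

lemma no_seven (htri : G.CliqueFree 3) {S : Finset V} (hc : S.card = 7)
    (he : ee G S S = 22) (hd : ∀ v ∈ S, 3 ≤ dg G S v) : False := by
  have h1 : ∃ v ∈ S, 4 ≤ dg G S v := by
    by_contra! h
    have : ee G S S ≤ ∑ _v ∈ S, 3 := Finset.sum_le_sum (fun v hv => by have := h v hv; omega)
    simp [hc] at this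
    omega
  obtain ⟨v, hv, hv4⟩ := h1
  set N := S.filter (fun u => G.Adj v u) with hN
  have hNS : N ⊆ S := Finset.filter_subset _ _
  have hNc : 4 ≤ N.card := by rw [dg_eq_card] at hv4; exact hv4
  have hsd := Finset.card_sdiff_add_card_eq_card hNS
  have hsub : ∀ u ∈ N, S.filter (fun t => G.Adj u t) ⊆ S \ N := by
    intro u hu t ht
    rw [Finset.mem_filter] at ht
    rw [Finset.mem_sdiff]
    refine ⟨ht.1, fun htN => ?_⟩
    exact no_tri htri (Finset.mem_filter.1 hu).2 (Finset.mem_filter.1 htN).2 ht.2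
  have hcard : ∀ u ∈ N, 3 ≤ (S.filter (fun t => G.Adj u t)).card := by
    intro u hu
    have := hd u (hNS hu)
    rwa [dg_eq_card] at this
  have h3 : (S \ N).card = 3 := by
    have hne : N.Nonempty := by rw [← Finset.card_pos]; omega
    obtain ⟨u, hu⟩ := hne
    have h1 := hcard u hu
    have h2 := Finset.card_le_card (hsub u hu)
    omega
  have hadj : ∀ u ∈ N, ∀ t ∈ S \ N, G.Adj u t := by
    intro u hu t ht
    have := Finset.eq_of_subset_of_card_le (hsub u hu) (by have := hcard u hu; omega)
    rw [← this] at ht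
    exact (Finset.mem_filter.1 ht).2
  have hbig : ∀ t ∈ S \ N, 4 ≤ dg G S t := by
    intro t ht
    rw [dg_eq_card]
    refine hNc.trans (Finset.card_le_card ?_)
    intro u hu
    exact Finset.mem_filter.2 ⟨hNS hu, (hadj u hu t ht).symm⟩
  have hsum : ee G S S = ∑ t ∈ S \ N, dg G S t + ∑ t ∈ N, dg G S t := by
    unfold ee; rw [Finset.sum_sdiff hNS]
  have s1 : ∑ _t ∈ S \ N, 4 ≤ ∑ t ∈ S \ N, dg G S t := Finset.sum_le_sum hbig
  have s2 : ∑ _t ∈ N, 3 ≤ ∑ t ∈ N, dg G S t := Finset.sum_le_sum (fun t ht => hd t (hNS ht))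
  simp only [Finset.sum_const, smul_eq_mul] at s1 s2
  omega

/-- five vertices spanning six edges induce a `K_{2,3}` -/
lemma exists_k23 (htri : G.CliqueFree 3) {K : Finset V} (hc : K.card = 5)
    (he : ee G K K = 12) : ∃ p q x y z : V, [p, q, x, y, z].Nodup ∧ K = {p, q, x, y, z} ∧
      ¬ G.Adj p q ∧ ¬ G.Adj x y ∧ ¬ G.Adj x z ∧ ¬ G.Adj y z ∧
      G.Adj p x ∧ G.Adj p y ∧ G.Adj p z ∧ G.Adj q x ∧ G.Adj q y ∧ G.Adj q z := by
  have h1 : ∃ v ∈ K, 3 ≤ dg G K v := by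
    by_contra! h
    have : ee G K K ≤ ∑ _v ∈ K, 2 := Finset.sum_le_sum (fun v hv => by have := h v hv; omega)
    simp [hc] at this
    omega
  obtain ⟨p, hp, hp3⟩ := h1
  set N := K.filter (fun u => G.Adj p u) with hN
  have hNK : N ⊆ K := Finset.filter_subset _ _
  have hNc : 3 ≤ N.card := by rw [dg_eq_card] at hp3; exact hp3
  have hsd := Finset.card_sdiff_add_card_eq_card hNK
  have hpN : p ∈ K \ N := by simp [hN, hp]
  have hind : ∀ u ∈ N, ∀ t ∈ N, ¬ G.Adj u t := fun u hu t ht h =>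
    no_tri htri (Finset.mem_filter.1 hu).2 (Finset.mem_filter.1 ht).2 h
  have hNN : ee G N N = 0 := by
    unfold ee dg
    refine Finset.sum_eq_zero (fun a ha => Finset.sum_eq_zero (fun b hb => ?_))
    rw [if_neg (hind a ha b hb)]
  have hKu : K = N ∪ (K \ N) := (Finset.union_sdiff_of_subset hNK).symm
  have hdis : Disjoint N (K \ N) := Finset.disjoint_sdiff
  have hee : ee G K K = 2 * ee G (K \ N) N + ee G (K \ N) (K \ N) := by
    conv_lhs => rw [hKu]
    rw [ee_union_left G hdis, ee_union_right G hdis, ee_union_right G hdis, hNN,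
      ee_comm G N (K \ N)]
    ring
  have hpNd : dg G N p = N.card := by
    rw [dg_eq_card]; congr 1
    ext u; simp only [hN, Finset.mem_filter]; tauto
  have hpos : 0 < (K \ N).card := Finset.card_pos.2 ⟨p, hpN⟩
  have hcase : (K \ N).card = 1 ∨ (K \ N).card = 2 := by omega
  rcases hcase with h | h
  · exfalso
    obtain ⟨a, ha⟩ := Finset.card_eq_one.1 h
    rw [ha] at hpN hee
    rw [Finset.mem_singleton] at hpN
    subst hpN
    simp only [ee, Finset.sum_singleton, hpNd] at hee
    have : dg G {p} p = 0 := by simp [dg]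
    simp only [ee] at he
    omega
  · obtain ⟨q, hq⟩ := Finset.card_eq_one.1
      (show ((K \ N).erase p).card = 1 by rw [Finset.card_erase_of_mem hpN, h])
    have hpq : K \ N = {p, q} := by
      rw [← Finset.insert_erase hpN, hq]
    have hqm : q ∈ (K \ N).erase p := by rw [hq]; simp
    have hqp : q ≠ p := (Finset.mem_erase.1 hqm).1
    have hqK : q ∈ K := (Finset.mem_sdiff.1 (Finset.mem_erase.1 hqm).2).1
    have hqN : q ∉ N := (Finset.mem_sdiff.1 (Finset.mem_erase.1 hqm).2).2
    have hnpq : ¬ G.Adj p q := by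
      intro hh; exact hqN (Finset.mem_filter.2 ⟨hqK, hh⟩)
    have hnqp : ¬ G.Adj q p := fun hh => hnpq hh.symm
    have hN3 : N.card = 3 := by omega
    have hdq : dg G N q = 3 := by
      rw [hpq] at hee
      have e1 : ee G {p, q} N = dg G N p + dg G N q := by
        unfold ee; rw [Finset.sum_pair hqp.symm]
      have e2 : ee G ({p, q} : Finset V) {p, q} = 0 := by
        unfold ee; rw [Finset.sum_pair hqp.symm]
        unfold dg; rw [Finset.sum_pair hqp.symm, Finset.sum_pair hqp.symm]
        simp [hnpq, hnqp]
      omega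
    have hqall : ∀ t ∈ N, G.Adj q t := by
      rw [dg_eq_card] at hdq
      have := Finset.eq_of_subset_of_card_le (Finset.filter_subset (fun u => G.Adj q u) N)
        (by omega)
      intro t ht
      rw [← this] at ht
      exact (Finset.mem_filter.1 ht).2
    obtain ⟨x, y, z, hxy, hxz, hyz, hxyz⟩ := Finset.card_eq_three.1 hN3
    have mx : x ∈ N := by rw [hxyz]; simp
    have my : y ∈ N := by rw [hxyz]; simp
    have mz : z ∈ N := by rw [hxyz]; simp
    have px := (Finset.mem_filter.1 mx).2
    have py := (Finset.mem_filter.1 my).2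
    have pz := (Finset.mem_filter.1 mz).2
    refine ⟨p, q, x, y, z, ?_, ?_, hnpq, hind x mx y my, hind x mx z mz, hind y my z mz,
      px, py, pz, hqall x mx, hqall y my, hqall z mz⟩
    · simp [hqp.symm, hxy, hxz, hyz, px.ne, py.ne, pz.ne, (hqall x mx).ne, (hqall y my).ne,
        (hqall z mz).ne]
    · rw [hKu, hpq, hxyz]; ext t; simp; tauto

lemma no_k33 (hreg : G.IsRegularOfDegree 5)
    (hcut : ∀ X : Finset V, 5 ≤ X.card → 5 ≤ Xᶜ.card → 13 ≤ dd G X)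
    (hn : 18 ≤ Fintype.card V) {A B : Finset V} (hA : A.card = 3) (hB : B.card = 3)
    (h : ∀ a ∈ A, ∀ b ∈ B, G.Adj a b) : False := by
  have hd : Disjoint A B := by
    rw [Finset.disjoint_left]
    intro a ha hb
    exact (h a ha a hb).ne rfl
  have hc : (A ∪ B).card = 6 := by rw [Finset.card_union_of_disjoint hd, hA, hB]
  have hcc : (A ∪ B)ᶜ.card = Fintype.card V - 6 := by rw [Finset.card_compl, hc]
  have h1 := hcut (A ∪ B) (by omega) (by omega)
  have h2 := dd_add hreg (A ∪ B)
  have h3 : ee G A B = 9 := by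
    have : ee G A B = ∑ _a ∈ A, ∑ _b ∈ B, 1 := by
      unfold ee dg
      refine Finset.sum_congr rfl (fun a ha => Finset.sum_congr rfl (fun b hb => ?_))
      rw [if_pos (h a ha b hb)]
    simp [this, hA, hB]
  have h4 : ee G (A ∪ B) (A ∪ B) = ee G A A + ee G B B + 2 * ee G A B := by
    rw [ee_union_left G hd, ee_union_right G hd, ee_union_right G hd, ee_comm G B A]; ring
  omega

lemma dg_inter_union (S T : Finset V) (v : V) :
    dg G S v + dg G T v = dg G (S ∩ T) v + dg G (S ∪ T) v := by
  unfold dg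
  rw [add_comm (∑ u ∈ S ∩ T, _), Finset.sum_union_inter]

lemma dg_le_five (hreg : G.IsRegularOfDegree 5) (S : Finset V) (v : V) : dg G S v ≤ 5 := by
  rw [← dg_univ hreg v]; exact dg_mono G (Finset.subset_univ S) v

/-- how two different atoms of size nine can meet -/
lemma pair_lemma (hreg : G.IsRegularOfDegree 5)
    (hcut : ∀ X : Finset V, 5 ≤ X.card → 5 ≤ Xᶜ.card → 13 ≤ dd G X)
    (hn : 18 ≤ Fintype.card V)
    (hmin : ∀ X : Finset V, dd G X = 13 → 6 ≤ X.card → 6 ≤ Xᶜ.card → 9 ≤ X.card)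
    {S T : Finset V} (hS : S.card = 9) (hT : T.card = 9) (dS : dd G S = 13) (dT : dd G T = 13)
    (hne : S ≠ T) (hI : (S ∩ T).Nonempty) :
    ((S ∩ T).card = 5 ∧ ee G (S ∩ T) (S ∩ T) = 12) ∨
    ((S ∩ T).card = 4 ∧ (S \ T).card = 5 ∧ (T \ S).card = 5 ∧ ee G (S \ T) (S \ T) = 12 ∧
      ee G (T \ S) (T \ S) = 12 ∧
      ∀ v ∈ S ∩ T, dg G S v + dg G T v = 5 + dg G (S ∩ T) v) := by
  obtain ⟨m1, m2⟩ := dd_submod G S T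
  have c1 := Finset.card_sdiff_add_card_inter S T
  have c2 := Finset.card_sdiff_add_card_inter T S
  rw [Finset.inter_comm T S] at c2
  have c3 := Finset.card_union_add_card_inter S T
  have k1 := Finset.card_add_card_compl (S ∩ T)
  have k2 := Finset.card_add_card_compl (S ∪ T)
  have k3 := Finset.card_add_card_compl (S \ T)
  have k4 := Finset.card_add_card_compl (T \ S)
  have hpos := hI.card_pos
  have hlt : (S ∩ T).card < 9 := by
    by_contra hge
    have e1 : S ∩ T = S :=
      Finset.eq_of_subset_of_card_le Finset.inter_subset_left (by omega)
    have e2 : S ∩ T = T :=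
      Finset.eq_of_subset_of_card_le Finset.inter_subset_right (by omega)
    exact hne (e1.symm.trans e2)
  rcases lt_or_ge (S ∩ T).card 5 with h | h
  · right
    have q1 : 5 ≤ (S \ T).card := by omega
    have q2 : 5 ≤ (T \ S).card := by omega
    have q3 : 6 ≤ (S \ T)ᶜ.card := by omega
    have q4 : 5 ≤ (T \ S)ᶜ.card := by omega
    have v3 := hcut (S \ T) q1 (by omega)
    have v4 := hcut (T \ S) q2 q4
    have d3 : dd G (S \ T) = 13 := by omega
    have d4 : dd G (T \ S) = 13 := by omega
    have h0 : ee G (S ∩ T) (S ∪ T)ᶜ = 0 := by omega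
    have h4 : (S ∩ T).card = 4 := by
      by_contra h4
      have := hmin (S \ T) d3 (by omega) q3
      omega
    have r1 : (S \ T).card = 5 := by omega
    have r2 : (T \ S).card = 5 := by omega
    have a2 := dd_add hreg (S \ T)
    have a3 := dd_add hreg (T \ S)
    rw [d3, r1] at a2
    rw [d4, r2] at a3
    refine ⟨h4, r1, r2, by omega, by omega, ?_⟩
    intro v hv
    have h0v : dg G (S ∪ T)ᶜ v = 0 := by
      unfold ee at h0
      exact Finset.sum_eq_zero_iff.1 h0 v hv
    have hu : dg G (S ∪ T) v = 5 := by
      have := dg_union G (disjoint_compl_right (a := S ∪ T)) v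
      rw [Finset.union_compl, dg_univ hreg] at this
      omega
    rw [dg_inter_union, hu]; ring
  · left
    have q1 : 5 ≤ (S ∪ T).card := by omega
    have q2 : 5 ≤ (S ∪ T)ᶜ.card := by omega
    have q3 : 6 ≤ (S ∩ T)ᶜ.card := by omega
    have v1 := hcut (S ∩ T) h (by omega)
    have v2 := hcut (S ∪ T) q1 q2
    have d1 : dd G (S ∩ T) = 13 := by omega
    have h5 : (S ∩ T).card = 5 := by
      by_contra h5
      have := hmin (S ∩ T) d1 (by omega) q3
      omega
    have a1 := dd_add hreg (S ∩ T)
    rw [d1, h5] at a1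
    exact ⟨h5, by omega⟩

end Structure

section Bridge

variable {α : Type*}

lemma dotc_map (L : List α) (a b : α → Bool) :
    dotc (L.map a) (L.map b) = (L.map (fun v => if a v = true ∧ b v = true then 1 else 0)).sum := by
  induction L with
  | nil => rfl
  | cons v L ih =>
    simp only [List.map_cons, List.sum_cons]
    rw [← ih]
    show cond (a v) (cond (b v) (Nat.add (dotc (L.map a) (L.map b)) 1) (dotc (L.map a) (L.map b)))
      (dotc (L.map a) (L.map b)) = _
    cases a v <;> cases b v <;> simp [add_comm]

lemma cntc_cons (a : Bool) (l : List Bool) : cntc (a :: l) = cond a (cntc l + 1) (cntc l) := rfl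

lemma cntc_map (L : List α) (a : α → Bool) :
    cntc (L.map a) = (L.map (fun v => if a v = true then 1 else 0)).sum := by
  induction L with
  | nil => rfl
  | cons v L ih =>
    simp only [List.map_cons, List.sum_cons]
    rw [← ih, cntc_cons]
    cases a v <;> simp [add_comm]

lemma eec_map (L : List α) (r : α → List Bool) (k : List Bool) (b : α → Bool) :
    eec (L.map r) k (L.map b) = (L.map (fun v => if b v = true then dotc (r v) k else 0)).sum := by
  induction L with
  | nil => rfl
  | cons v L ih =>
    simp only [List.map_cons, List.sum_cons]
    rw [← ih]
    show cond (b v) (Nat.add (dotc (r v) k) (eec (L.map r) k (L.map b)))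
      (eec (L.map r) k (L.map b)) = _
    cases b v <;> simp

lemma fullc_map (L : List α) (r : α → List Bool) (k : List Bool) (b : α → Bool) :
    fullc (L.map r) k (L.map b) = true ↔
      ∀ v ∈ L, b v = true → dotc (r v) k = 2 → 4 ≤ cntc (r v) := by
  induction L with
  | nil => simp; rfl
  | cons v L ih =>
    simp only [List.map_cons, List.forall_mem_cons]
    rw [← ih]
    show and (or (not (b v)) (or (not (Nat.beq (dotc (r v) k) 2)) (Nat.ble 4 (cntc (r v)))))
      (fullc (L.map r) k (L.map b)) = true ↔ _
    rw [Bool.and_eq_true]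
    apply and_congr_left
    intro _
    simp only [Bool.or_eq_true, Bool.not_eq_true', Nat.ble_eq, ← Bool.not_eq_true, Nat.beq_eq]
    tauto

lemma somec_map (L : List α) (r : α → List Bool) (k : List Bool) (b : α → Bool) :
    somec (L.map r) k (L.map b) = true ↔
      ∃ v ∈ L, b v = true ∧ dotc (r v) k = 2 ∧ 4 ≤ cntc (r v) := by
  induction L with
  | nil => simp; rfl
  | cons v L ih =>
    simp only [List.map_cons, List.exists_mem_cons_iff]
    rw [← ih]
    show or (and (b v) (and (Nat.beq (dotc (r v) k) 2) (Nat.ble 4 (cntc (r v)))))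
      (somec (L.map r) k (L.map b)) = true ↔ _
    simp only [Bool.or_eq_true, Bool.and_eq_true, Nat.ble_eq, Nat.beq_eq]

lemma combos_iff (n : ℕ) : ∀ (k : ℕ) (p : List Bool → Bool), combos n k p = true ↔
    ∀ l : List Bool, l.length = n → cntc l = k → p l = true := by
  induction n with
  | zero =>
    intro k p
    cases k with
    | zero =>
      show p [] = true ↔ _
      constructor
      · intro h l hl _
        rw [List.length_eq_zero_iff.1 hl]; exact h
      · intro h; exact h [] rfl rfl
    | succ k =>
      show true = true ↔ _
      simp only [true_iff]
      intro l hl hc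
      rw [List.length_eq_zero_iff.1 hl] at hc
      exact absurd hc (by show 0 ≠ k + 1; omega)
  | succ n ih =>
    intro k p
    cases k with
    | zero =>
      show combos n 0 (fun l => p (false :: l)) = true ↔ _
      rw [ih]
      constructor
      · intro h l hl hc
        match l, hl with
        | a :: l, hl =>
          rw [cntc_cons] at hc
          cases a with
          | true => simp at hc
          | false => exact h l (by simpa using hl) hc
      · intro h l hl hc
        exact h (false :: l) (by simp [hl]) hc
    | succ k =>
      show and (combos n k (fun l => p (true :: l))) (combos n (k + 1) (fun l => p (false :: l)))
        = true ↔ _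
      rw [Bool.and_eq_true, ih, ih]
      constructor
      · rintro ⟨h1, h2⟩ l hl hc
        match l, hl with
        | a :: l, hl =>
          rw [cntc_cons] at hc
          cases a with
          | true => exact h1 l (by simpa using hl) (by simpa using hc)
          | false => exact h2 l (by simpa using hl) hc
      · intro h
        refine ⟨fun l hl hc => h (true :: l) (by simp [hl]) ?_,
          fun l hl hc => h (false :: l) (by simp [hl]) hc⟩
        rw [cntc_cons, hc]; rfl

end Bridge

section Spec

variable {V : Type*} [Fintype V] [DecidableEq V] (G : SimpleGraph V) [DecidableRel G.Adj]

/-- row of the adjacency matrix -/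
def rowL (L : List V) (v : V) : List Bool := L.map (fun u => decide (G.Adj v u))

/-- adjacency matrix -/
def rowsL (L : List V) : List (List Bool) := L.map (rowL G L)

/-- indicator list -/
def ind (L : List V) (X : Finset V) : List Bool := L.map (fun v => decide (v ∈ X))

/-- vertices of degree at least four inside `S` -/
def big (S : Finset V) : Finset V := S.filter (fun v => 4 ≤ dg G S v)

/-- all vertices of `K` of degree two in `K` have degree at least four in `S` -/
def fullp (S K : Finset V) : Prop := ∀ v ∈ K, dg G K v = 2 → 4 ≤ dg G S v

/-- some vertex of `K` of degree two in `K` has degree at least four in `S` -/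
def somep (S K : Finset V) : Prop := ∃ v ∈ K, dg G K v = 2 ∧ 4 ≤ dg G S v

/-- first alternative -/
def SpecN (S : Finset V) (h y : V) : Prop :=
  ∀ K ⊆ S, K.card = 5 → ee G K K = 12 →
    somep G S K ∧ (h ∈ K → fullp G S K) ∧ (y ∈ K ∨ dg G (S \ K) y ≠ 3)

/-- second alternative -/
def SpecH (S : Finset V) (h y : V) : Prop :=
  ∀ K ⊆ S, K.card = 5 → ee G K K = 12 →
    somep G S K ∧ h ∈ K ∧ (dg G K h ≠ 3 ∨ fullp G S K) ∧ (y ∉ K ∨ dg G K h = 3 ∨ dg G K y = 3)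

variable {G}

lemma sum_aux {L : List V} (hL : L.Nodup) (f : V → ℕ) (X : Finset V) (hX : X ⊆ L.toFinset) :
    (L.map (fun v => if v ∈ X then f v else 0)).sum = ∑ v ∈ X, f v := by
  rw [← List.sum_toFinset _ hL, ← Finset.sum_filter]
  congr 1
  ext v
  simp only [Finset.mem_filter]
  exact ⟨fun h => h.2, fun h => ⟨hX h, h⟩⟩

lemma dotc_row {L : List V} (hL : L.Nodup) {X : Finset V} (hX : X ⊆ L.toFinset) (v : V) :
    dotc (rowL G L v) (ind L X) = dg G X v := by
  unfold rowL ind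
  rw [dotc_map, dg, ← sum_aux hL _ X hX]
  congr 1
  apply List.map_congr_left
  intro u _
  simp only [decide_eq_true_eq]
  split_ifs <;> tauto

lemma cntc_row {L : List V} (hL : L.Nodup) (v : V) :
    cntc (rowL G L v) = dg G L.toFinset v := by
  unfold rowL
  rw [cntc_map, dg, List.sum_toFinset _ hL]
  simp only [decide_eq_true_eq]

lemma cntc_ind {L : List V} (hL : L.Nodup) {X : Finset V} (hX : X ⊆ L.toFinset) :
    cntc (ind L X) = X.card := by
  unfold ind
  rw [cntc_map, Finset.card_eq_sum_ones, ← sum_aux hL _ X hX]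
  simp only [decide_eq_true_eq]

lemma eec_rows {L : List V} (hL : L.Nodup) {X : Finset V} (hX : X ⊆ L.toFinset) :
    eec (rowsL G L) (ind L X) (ind L X) = ee G X X := by
  unfold rowsL
  conv_lhs => arg 3; unfold ind
  rw [eec_map, ee, ← sum_aux hL _ X hX]
  simp only [dotc_row hL hX, decide_eq_true_eq]

lemma fullc_rows {L : List V} (hL : L.Nodup) {X : Finset V} (hX : X ⊆ L.toFinset) :
    fullc (rowsL G L) (ind L X) (ind L X) = true ↔ fullp G L.toFinset X := by
  unfold rowsL
  conv_lhs => arg 1; arg 3; unfold ind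
  rw [fullc_map]
  simp only [dotc_row hL hX, cntc_row hL, decide_eq_true_eq]
  exact ⟨fun h v hv => h v (List.mem_toFinset.1 (hX hv)) hv, fun h v _ hv => h v hv⟩

lemma somec_rows {L : List V} (hL : L.Nodup) {X : Finset V} (hX : X ⊆ L.toFinset) :
    somec (rowsL G L) (ind L X) (ind L X) = true ↔ somep G L.toFinset X := by
  unfold rowsL
  conv_lhs => arg 1; arg 3; unfold ind
  rw [somec_map]
  simp only [dotc_row hL hX, cntc_row hL, decide_eq_true_eq]
  exact ⟨fun ⟨v, _, h⟩ => ⟨v, h⟩, fun ⟨v, h⟩ => ⟨v, List.mem_toFinset.1 (hX h.1), h⟩⟩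

lemma bigc_rows {L : List V} (hL : L.Nodup) :
    bigc (rowsL G L) = ind L (big G L.toFinset) := by
  unfold bigc rowsL ind big
  rw [List.map_map]
  apply List.map_congr_left
  intro v hv
  rw [Bool.eq_iff_iff]
  simp only [Function.comp, cntc_row hL, Nat.ble_eq, decide_eq_true_eq, Finset.mem_filter,
    List.mem_toFinset, hv, true_and]

lemma ind_not {L : List V} (X : Finset V) :
    (ind L X).map not = ind L (L.toFinset \ X) := by
  unfold ind
  rw [List.map_map]
  apply List.map_congr_left
  intro v hv
  simp [hv]

lemma exists_ind {L : List V} (hL : L.Nodup) (l : List Bool) (hl : l.length = L.length) :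
    ∃ X ⊆ L.toFinset, l = ind L X := by
  refine ⟨L.toFinset.filter (fun v => l.getD (L.idxOf v) false = true), Finset.filter_subset _ _, ?_⟩
  unfold ind
  apply List.ext_getElem
  · simp [hl]
  · intro i h1 h2
    have h3 : i < L.length := by omega
    rw [List.getElem_map, Bool.eq_iff_iff]
    simp [hL.idxOf_getElem i h3, h1]

lemma getD_rows {L : List V} {i : ℕ} (hi : i < L.length) :
    (rowsL G L).getD i [] = rowL G L L[i] := by
  unfold rowsL
  rw [List.getD_eq_getElem _ _ (by simpa using hi), List.getElem_map]

lemma getD_ind {L : List V} {i : ℕ} (hi : i < L.length) (X : Finset V) :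
    (ind L X).getD i false = true ↔ L[i] ∈ X := by
  unfold ind
  rw [List.getD_eq_getElem _ _ (by simpa using hi), List.getElem_map, decide_eq_true_eq]

lemma condc_of {L : List V} (hL : L.Nodup) (h9 : L.length = 9)
    (hd : ∀ v ∈ L.toFinset, 3 ≤ dg G L.toFinset v)
    (h6 : ∀ X ⊆ L.toFinset, X.card = 6 → ee G X X ≤ 17) : condc (rowsL G L) = true := by
  unfold condc
  rw [Bool.and_eq_true, List.all_eq_true, combos_iff]
  constructor
  · intro r hr
    unfold rowsL at hr
    obtain ⟨v, hv, rfl⟩ := List.mem_map.1 hr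
    rw [Nat.ble_eq, cntc_row hL]
    exact hd v (List.mem_toFinset.2 hv)
  · intro l hl hc
    obtain ⟨X, hX, rfl⟩ := exists_ind hL l (hl.trans h9.symm)
    rw [cntc_ind hL hX] at hc
    rw [Nat.ble_eq, eec_rows hL hX]
    exact h6 X hX hc

lemma all5_of {L : List V} (hL : L.Nodup) (h9 : L.length = 9) {P : List Bool → Bool}
    (h : all5 (rowsL G L) P = true) :
    ∀ K ⊆ L.toFinset, K.card = 5 → ee G K K = 12 → somep G L.toFinset K ∧ P (ind L K) = true := by
  unfold all5 at h
  rw [combos_iff] at h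
  intro K hK hc he
  have := h (ind L K) (by unfold ind; simp [h9]) (by rw [cntc_ind hL hK, hc])
  rw [Bool.or_eq_true, Bool.and_eq_true, somec_rows hL hK, eec_rows hL hK, he] at this
  rcases this with h | h
  · exact absurd h (by decide)
  · exact h

lemma claimHY_of {L : List V} (hL : L.Nodup) (h9 : L.length = 9) {i j : ℕ} (hi : i < L.length)
    (hj : j < L.length) (hc : claimHY (rowsL G L) i j = true) :
    dg G L.toFinset L[i] = 4 ∧ dg G L.toFinset L[j] = 4 ∧
    dg G (big G L.toFinset) L[i] ≠ dg G (big G L.toFinset) L[j] ∧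
    (SpecN G L.toFinset L[i] L[j] ∨ SpecH G L.toFinset L[i] L[j]) := by
  have hb : big G L.toFinset ⊆ L.toFinset := Finset.filter_subset _ _
  unfold claimHY at hc
  rw [getD_rows hi, getD_rows hj, bigc_rows hL, dotc_row hL hb, dotc_row hL hb, cntc_row hL,
    cntc_row hL] at hc
  simp only [Bool.and_eq_true, Bool.not_eq_true', ← Bool.not_eq_true, Nat.beq_eq] at hc
  obtain ⟨⟨h1, h2⟩, h3, h4⟩ := hc
  refine ⟨h1, h2, h3, ?_⟩
  cases hq : Nat.beq (dg G (big G L.toFinset) L[i]) 0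
  · right
    rw [hq, cond_false, Bool.and_eq_true] at h4
    intro K hK h5 h12
    obtain ⟨e1, e2⟩ := all5_of hL h9 h4.2 K hK h5 h12
    refine ⟨e1, ?_⟩
    unfold claimH at e2
    rw [getD_rows hi, getD_rows hj, dotc_row hL hK, dotc_row hL hK] at e2
    simp only [Bool.and_eq_true, Bool.or_eq_true, Bool.not_eq_true', ← Bool.not_eq_true,
      Nat.beq_eq, getD_ind hi, getD_ind hj, fullc_rows hL hK] at e2
    exact e2
  · left
    rw [hq, cond_true] at h4
    intro K hK h5 h12
    obtain ⟨e1, e2⟩ := all5_of hL h9 h4 K hK h5 h12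
    refine ⟨e1, ?_⟩
    unfold claimN at e2
    rw [getD_rows hj, ind_not, dotc_row hL Finset.sdiff_subset] at e2
    simp only [Bool.and_eq_true, Bool.or_eq_true, Bool.not_eq_true', ← Bool.not_eq_true,
      Nat.beq_eq, getD_ind hi, getD_ind hj, fullc_rows hL hK] at e2
    exact ⟨fun hh => e2.1.resolve_left (not_not.2 hh), e2.2⟩

/-- the special vertices -/
lemma claimc_of {L : List V} (hL : L.Nodup) (h9 : L.length = 9)
    (hc : claimc (rowsL G L) = true) : ∃ h ∈ L.toFinset, ∃ y ∈ L.toFinset,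
    dg G L.toFinset h = 4 ∧ dg G L.toFinset y = 4 ∧
    dg G (big G L.toFinset) h ≠ dg G (big G L.toFinset) y ∧
    (SpecN G L.toFinset h y ∨ SpecH G L.toFinset h y) := by
  unfold claimc at hc
  obtain ⟨i, hi, hc⟩ := List.any_eq_true.1 hc
  rw [Bool.and_eq_true] at hc
  obtain ⟨j, hj, hc⟩ := List.any_eq_true.1 hc.2
  have hidx : ∀ i ∈ idx, i < 9 := by decide
  have hi' : i < L.length := by rw [h9]; exact hidx i hi
  have hj' : j < L.length := by rw [h9]; exact hidx j hj
  exact ⟨L[i], by simp, L[j], by simp, claimHY_of hL h9 hi' hj' hc⟩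

end Spec

section Label

lemma exists_sorted {V : Type*} [DecidableEq V] (W : Finset V) (c : V → ℕ) :
    ∃ L : List V, L.Nodup ∧ L.toFinset = W ∧ L.Pairwise (fun a b => c b ≤ c a) := by
  refine ⟨W.toList.mergeSort (fun a b => decide (c b ≤ c a)), ?_, ?_, ?_⟩
  · exact (List.mergeSort_perm _ _).nodup_iff.2 W.nodup_toList
  · ext v
    rw [List.mem_toFinset, (List.mergeSort_perm _ _).mem_iff, Finset.mem_toList]
  · have := List.pairwise_mergeSort (le := fun a b : V => decide (c b ≤ c a))
      (by intro a b d h1 h2; simp only [decide_eq_true_eq] at *; omega)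
      (by intro a b; simp only [Bool.or_eq_true, decide_eq_true_eq]; omega) W.toList
    simpa using this

lemma four_cases (c1 c2 c3 c4 : ℕ) (e12 e13 e14 e23 e24 e34 : Bool)
    (h12 : c2 ≤ c1) (h23 : c3 ≤ c2) (h34 : c4 ≤ c3) (h1 : c1 ≤ 2)
    (hs : c1 + c2 + c3 + c4 + (e12.toNat + e13.toNat + e14.toNat + e23.toNat + e24.toNat
      + e34.toNat) = 10)
    (t1 : ¬ (e12 = true ∧ e13 = true ∧ e23 = true)) (t2 : ¬ (e12 = true ∧ e14 = true ∧ e24 = true))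
    (t3 : ¬ (e13 = true ∧ e14 = true ∧ e34 = true)) (t4 : ¬ (e23 = true ∧ e24 = true ∧ e34 = true))
    (p12 : ¬ (e12 = true ∧ c1 = 2 ∧ c2 = 2)) (p13 : ¬ (e13 = true ∧ c1 = 2 ∧ c3 = 2))
    (p23 : ¬ (e23 = true ∧ c2 = 2 ∧ c3 = 2)) (p14 : ¬ (e14 = true ∧ c1 = 2 ∧ c4 = 2))
    (p24 : ¬ (e24 = true ∧ c2 = 2 ∧ c4 = 2)) (p34 : ¬ (e34 = true ∧ c3 = 2 ∧ c4 = 2)) :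
    (c1 = 2 ∧ c2 = 2 ∧ c3 = 2 ∧ c4 = 1 ∧ e12 = false ∧ e13 = false ∧ e14 = true ∧ e23 = false ∧
      e24 = true ∧ e34 = true) ∨
    (c1 = 2 ∧ c2 = 2 ∧ c3 = 1 ∧ c4 = 1 ∧ e12 = false ∧ e13 = true ∧ e14 = true ∧ e23 = true ∧
      e24 = true ∧ e34 = false) := by
  cases e12 <;> cases e13 <;> cases e14 <;> cases e23 <;> cases e24 <;> cases e34 <;>
    simp only [Bool.toNat_true, Bool.toNat_false, true_and, and_true, false_and, and_false,
      not_true_eq_false, not_false_eq_true, reduceCtorEq, or_false, false_or] at * <;> omega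

lemma mem_atts2 : ∀ p q x y z : Bool, p.toNat + q.toNat + x.toNat + y.toNat + z.toNat = 2 →
    ¬ ((p || q) && (x || y || z)) = true → (⟨p, q, x, y, z⟩ : Att) ∈ atts2 := by
  intro p q x y z
  cases p <;> cases q <;> cases x <;> cases y <;> cases z <;> simp [atts2]

lemma mem_atts1 : ∀ p q x y z : Bool, p.toNat + q.toNat + x.toNat + y.toNat + z.toNat = 1 →
    (⟨p, q, x, y, z⟩ : Att) ∈ atts1 := by
  intro p q x y z
  cases p <;> cases q <;> cases x <;> cases y <;> cases z <;> simp [atts1]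

lemma le_two_aux : ∀ p q x y z : Bool, ¬ ((p || q) && (x || y || z)) = true →
    ¬ (x = true ∧ y = true ∧ z = true) →
    p.toNat + q.toNat + x.toNat + y.toNat + z.toNat ≤ 2 := by decide

lemma two_aux : ∀ p q x y z : Bool, ¬ ((p || q) && (x || y || z)) = true →
    p.toNat + q.toNat + x.toNat + y.toNat + z.toNat = 2 →
    (p = true ∧ q = true) ∨ (x = true ∧ y = true) ∨ (x = true ∧ z = true) ∨
      (y = true ∧ z = true) := by decide

lemma imp_true {a b : Bool} (h : imp a b = true) (ha : a = true) : b = true := by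
  subst ha; exact h

variable {V : Type*} [Fintype V] [DecidableEq V] {G : SimpleGraph V} [DecidableRel G.Adj]

lemma dg_list {L : List V} (hL : L.Nodup) (v : V) :
    dg G L.toFinset v = (L.map (fun u => (decide (G.Adj v u)).toNat)).sum := by
  rw [dg, List.sum_toFinset _ hL]
  congr 1
  apply List.map_congr_left
  intro u _
  by_cases h : G.Adj v u <;> simp [h]

set_option maxHeartbeats 1000000 in
lemma structure_lemma (hreg : G.IsRegularOfDegree 5) (htri : G.CliqueFree 3)
    (hcut : ∀ X : Finset V, 5 ≤ X.card → 5 ≤ Xᶜ.card → 13 ≤ dd G X)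
    (hn : 18 ≤ Fintype.card V) {S : Finset V} (hS : S.card = 9) (heS : ee G S S = 32)
    (hd : ∀ v ∈ S, 3 ≤ dg G S v) {K : Finset V} (hKS : K ⊆ S) (hK5 : K.card = 5)
    (hK12 : ee G K K = 12) :
    ∃ h ∈ S, ∃ y ∈ S, dg G S h = 4 ∧ dg G S y = 4 ∧
      dg G (big G S) h ≠ dg G (big G S) y ∧ (SpecN G S h y ∨ SpecH G S h y) := by
  obtain ⟨p, q, x, y, z, hnd, hK, npq, nxy, nxz, nyz, px, py, pz, qx, qy, qz⟩ :=
    exists_k23 htri hK5 hK12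
  have hKL : K = [p, q, x, y, z].toFinset := by rw [hK]; ext u; simp
  obtain ⟨LW, hWn, hWL, hWp⟩ := exists_sorted (S \ K) (dg G K)
  have hWc : LW.length = 4 := by
    rw [← List.toFinset_card_of_nodup hWn, hWL, Finset.card_sdiff_of_subset hKS]; omega
  obtain ⟨a, b, c, d, rfl⟩ : ∃ a b c d, LW = [a, b, c, d] := by
    match LW, hWc with
    | [a, b, c, d], _ => exact ⟨a, b, c, d, rfl⟩
  have hab : dg G K b ≤ dg G K a := by simp at hWp; tauto
  have hbc : dg G K c ≤ dg G K b := by simp at hWp; tauto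
  have hcd : dg G K d ≤ dg G K c := by simp at hWp; tauto
  have ha : a ∈ S \ K := by rw [← hWL]; simp
  have hb : b ∈ S \ K := by rw [← hWL]; simp
  have hc : c ∈ S \ K := by rw [← hWL]; simp
  have hdm : d ∈ S \ K := by rw [← hWL]; simp
  -- degree into `K`
  have hdg : ∀ w, dg G K w = (decide (G.Adj w p)).toNat + (decide (G.Adj w q)).toNat +
      (decide (G.Adj w x)).toNat + (decide (G.Adj w y)).toNat + (decide (G.Adj w z)).toNat := by
    intro w
    rw [hKL, dg_list hnd]
    simp only [List.map_cons, List.map_nil, List.sum_cons, List.sum_nil]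
    ring
  have hcross : ∀ w, ¬ ((decide (G.Adj w p) || decide (G.Adj w q)) &&
      (decide (G.Adj w x) || decide (G.Adj w y) || decide (G.Adj w z))) = true := by
    intro w
    simp only [Bool.and_eq_true, Bool.or_eq_true, decide_eq_true_eq]
    rintro ⟨h1 | h1, (h2 | h2) | h2⟩
    · exact no_tri htri h1 h2 px
    · exact no_tri htri h1 h2 py
    · exact no_tri htri h1 h2 pz
    · exact no_tri htri h1 h2 qx
    · exact no_tri htri h1 h2 qy
    · exact no_tri htri h1 h2 qz
  have hne : ∀ w ∈ S \ K, w ≠ p ∧ w ≠ q ∧ w ≠ x ∧ w ≠ y ∧ w ≠ z := by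
    intro w hw
    have := (Finset.mem_sdiff.1 hw).2
    rw [hK] at this
    simpa using this
  have hnd' := hnd
  simp only [List.nodup_cons, List.mem_cons, not_or, List.not_mem_nil, not_false_eq_true,
    List.nodup_nil, and_true] at hnd'
  obtain ⟨⟨n1, n2, n3, n4⟩, ⟨n5, n6, n7⟩, ⟨n8, n9⟩, n10⟩ := hnd'
  have k33 : ∀ a1 a2 a3 b1 b2 b3 : V, a1 ≠ a2 → a1 ≠ a3 → a2 ≠ a3 → b1 ≠ b2 → b1 ≠ b3 → b2 ≠ b3 →
      G.Adj a1 b1 → G.Adj a1 b2 → G.Adj a1 b3 → G.Adj a2 b1 → G.Adj a2 b2 → G.Adj a2 b3 →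
      G.Adj a3 b1 → G.Adj a3 b2 → G.Adj a3 b3 → False := by
    intro a1 a2 a3 b1 b2 b3 m1 m2 m3 m4 m5 m6 r1 r2 r3 r4 r5 r6 r7 r8 r9
    refine no_k33 hreg hcut hn (A := {a1, a2, a3}) (B := {b1, b2, b3})
      (Finset.card_eq_three.2 ⟨_, _, _, m1, m2, m3, rfl⟩)
      (Finset.card_eq_three.2 ⟨_, _, _, m4, m5, m6, rfl⟩) ?_
    intro u hu v hv
    simp only [Finset.mem_insert, Finset.mem_singleton] at hu hv
    rcases hu with rfl | rfl | rfl <;> rcases hv with rfl | rfl | rfl <;> assumption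
  have hall : ∀ w ∈ S \ K, ¬ (G.Adj w x ∧ G.Adj w y ∧ G.Adj w z) := by
    rintro w hw ⟨r1, r2, r3⟩
    obtain ⟨e1, e2, -⟩ := hne w hw
    exact k33 p q w x y z n1 e1.symm e2.symm n8 n9 n10 px py pz qx qy qz r1 r2 r3
  have hle2 : ∀ w ∈ S \ K, dg G K w ≤ 2 := by
    intro w hw
    rw [hdg]
    exact le_two_aux _ _ _ _ _ (hcross w) (by simpa only [decide_eq_true_eq] using hall w hw)
  have hat2 : ∀ w, dg G K w = 2 → (G.Adj w p ∧ G.Adj w q) ∨ (G.Adj w x ∧ G.Adj w y) ∨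
      (G.Adj w x ∧ G.Adj w z) ∨ (G.Adj w y ∧ G.Adj w z) := by
    intro w hw
    rw [hdg] at hw
    simpa only [decide_eq_true_eq] using two_aux _ _ _ _ _ (hcross w) hw
  have mixed : ∀ w ∈ S \ K, ∀ w' ∈ S \ K, G.Adj w w' → (G.Adj w p ∧ G.Adj w q) →
      (G.Adj w' x ∧ G.Adj w' y) ∨ (G.Adj w' x ∧ G.Adj w' z) ∨ (G.Adj w' y ∧ G.Adj w' z) →
      False := by
    rintro w hw w' hw' hA ⟨r1, r2⟩ h
    obtain ⟨e1, e2, e3, e4, e5⟩ := hne w hw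
    obtain ⟨f1, f2, f3, f4, f5⟩ := hne w' hw'
    rcases h with ⟨r3, r4⟩ | ⟨r3, r4⟩ | ⟨r3, r4⟩
    · exact k33 p q w' w x y n1 f1.symm f2.symm e3 e4 n8 r1.symm px py r2.symm qx qy hA.symm r3 r4
    · exact k33 p q w' w x z n1 f1.symm f2.symm e3 e5 n9 r1.symm px pz r2.symm qx qz hA.symm r3 r4
    · exact k33 p q w' w y z n1 f1.symm f2.symm e4 e5 n10 r1.symm py pz r2.symm qy qz hA.symm r3 r4
  have hshare : ∀ w w' u, G.Adj w w' → G.Adj w u → G.Adj w' u → False :=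
    fun w w' u h1 h2 h3 => no_tri htri h1 h2 h3
  have PR : ∀ w ∈ S \ K, ∀ w' ∈ S \ K,
      ¬ (decide (G.Adj w w') = true ∧ dg G K w = 2 ∧ dg G K w' = 2) := by
    rintro w hw w' hw' ⟨hA, h1, h2⟩
    rw [decide_eq_true_eq] at hA
    have s1 := hshare w w' p hA
    have s2 := hshare w w' x hA
    have s3 := hshare w w' y hA
    have s4 := hshare w w' z hA
    rcases hat2 w h1 with r | r
    · rcases hat2 w' h2 with r' | r'
      · exact s1 r.1 r'.1
      · exact mixed w hw w' hw' hA r r'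
    · rcases hat2 w' h2 with r' | r'
      · exact mixed w' hw' w hw hA.symm r' r
      · clear * - r r' s2 s3 s4
        tauto
  -- edge count
  have hcount : dg G K a + dg G K b + dg G K c + dg G K d + ((decide (G.Adj a b)).toNat +
      (decide (G.Adj a c)).toNat + (decide (G.Adj a d)).toNat + (decide (G.Adj b c)).toNat +
      (decide (G.Adj b d)).toNat + (decide (G.Adj c d)).toNat) = 10 := by
    have hdis : Disjoint K (S \ K) := Finset.disjoint_sdiff
    have hu : S = K ∪ (S \ K) := (Finset.union_sdiff_of_subset hKS).symm
    have e1 : ee G S S = ee G K K + ee G (S \ K) (S \ K) + 2 * ee G (S \ K) K := by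
      conv_lhs => rw [hu]
      rw [ee_union_left G hdis, ee_union_right G hdis, ee_union_right G hdis,
        ee_comm G K (S \ K)]
      ring
    have e2 : ee G (S \ K) K = dg G K a + dg G K b + dg G K c + dg G K d := by
      rw [← hWL, ee, List.sum_toFinset _ hWn]
      simp only [List.map_cons, List.map_nil, List.sum_cons, List.sum_nil]
      ring
    have e3 : ee G (S \ K) (S \ K) = 2 * ((decide (G.Adj a b)).toNat +
      (decide (G.Adj a c)).toNat + (decide (G.Adj a d)).toNat + (decide (G.Adj b c)).toNat +
      (decide (G.Adj b d)).toNat + (decide (G.Adj c d)).toNat) := by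
      rw [← hWL, ee, List.sum_toFinset _ hWn]
      simp only [dg_list hWn, List.map_cons, List.map_nil, List.sum_cons, List.sum_nil,
        SimpleGraph.irrefl, decide_false, Bool.toNat_false, G.adj_comm b a, G.adj_comm c a,
        G.adj_comm d a, G.adj_comm c b, G.adj_comm d b, G.adj_comm d c]
      ring
    omega
  have htr : ∀ u v w : V, ¬ (decide (G.Adj u v) = true ∧ decide (G.Adj u w) = true ∧
      decide (G.Adj v w) = true) := by
    intro u v w
    simp only [decide_eq_true_eq]
    rintro ⟨h1, h2, h3⟩
    exact no_tri htri h1 h2 h3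
  have hcases := four_cases _ _ _ _ _ _ _ _ _ _ hab hbc hcd (hle2 a ha) hcount
    (htr a b c) (htr a b d) (htr a c d) (htr b c d) (PR a ha b hb) (PR a ha c hc) (PR b hb c hc)
    (PR a ha d hdm) (PR b hb d hdm) (PR c hc d hdm)
  -- attachments
  let att : V → Att := fun w => ⟨decide (G.Adj w p), decide (G.Adj w q), decide (G.Adj w x),
    decide (G.Adj w y), decide (G.Adj w z)⟩
  have m2 : ∀ w, dg G K w = 2 → att w ∈ atts2 := fun w hw =>
    mem_atts2 _ _ _ _ _ (by rw [← hdg, hw]) (hcross w)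
  have m1 : ∀ w, dg G K w = 1 → att w ∈ atts1 := fun w hw =>
    mem_atts1 _ _ _ _ _ (by rw [← hdg, hw])
  have hdisj : ∀ w w', decide (G.Adj w w') = true → (att w).dis (att w') = true := by
    intro w w' hA
    rw [decide_eq_true_eq] at hA
    have s1 := hshare w w' p hA
    have s2 := hshare w w' x hA
    have s3 := hshare w w' y hA
    have s4 := hshare w w' z hA
    have s5 := hshare w w' q hA
    simp only [att, Att.dis, Bool.not_eq_true', ← Bool.not_eq_true, Bool.or_eq_true,
      Bool.and_eq_true, decide_eq_true_eq]
    rintro (h | h | h | h | h)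
    · exact s1 h.1 h.2
    · exact s5 h.1 h.2
    · exact s2 h.1 h.2
    · exact s3 h.1 h.2
    · exact s4 h.1 h.2
  -- the labelling
  set L : List V := [p, q, x, y, z, a, b, c, d] with hLdef
  have hLS : L.toFinset = S := by
    have e1 : L = [p, q, x, y, z] ++ [a, b, c, d] := rfl
    rw [e1, List.toFinset_append, ← hKL, hWL, Finset.union_sdiff_of_subset hKS]
  have hLn : L.Nodup := by
    have e1 : L = [p, q, x, y, z] ++ [a, b, c, d] := rfl
    rw [e1, List.nodup_append]
    refine ⟨hnd, hWn, ?_⟩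
    intro u hu v hv huv
    subst huv
    have h1 : u ∈ K := by rw [hKL]; exact List.mem_toFinset.2 hu
    have h2 : u ∈ S \ K := by rw [← hWL]; exact List.mem_toFinset.2 hv
    exact (Finset.mem_sdiff.1 h2).2 h1
  have h9 : L.length = 9 := rfl
  have hrows : rowsL G L = rowsc (att a) (att b) (att c) (att d) (decide (G.Adj a b))
      (decide (G.Adj a c)) (decide (G.Adj a d)) (decide (G.Adj b c)) (decide (G.Adj b d))
      (decide (G.Adj c d)) := by
    have nqp : ¬ G.Adj q p := fun h => npq (G.adj_symm h)
    have nyx : ¬ G.Adj y x := fun h => nxy (G.adj_symm h)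
    have nzx : ¬ G.Adj z x := fun h => nxz (G.adj_symm h)
    have nzy : ¬ G.Adj z y := fun h => nyz (G.adj_symm h)
    simp only [rowsL, rowL, rowsc, L, att, List.map_cons, List.map_nil, SimpleGraph.irrefl,
      npq, nxy, nxz, nyz, nqp, nyx, nzx, nzy, px, py, pz, qx, qy, qz, px.symm, py.symm, pz.symm,
      qx.symm, qy.symm, qz.symm, decide_true, decide_false,
      G.adj_comm p a, G.adj_comm p b, G.adj_comm p c, G.adj_comm p d,
      G.adj_comm q a, G.adj_comm q b, G.adj_comm q c, G.adj_comm q d,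
      G.adj_comm x a, G.adj_comm x b, G.adj_comm x c, G.adj_comm x d,
      G.adj_comm y a, G.adj_comm y b, G.adj_comm y c, G.adj_comm y d,
      G.adj_comm z a, G.adj_comm z b, G.adj_comm z c, G.adj_comm z d,
      G.adj_comm b a, G.adj_comm c a, G.adj_comm d a, G.adj_comm c b, G.adj_comm d b,
      G.adj_comm d c]
  have hcond : condc (rowsL G L) = true := by
    refine condc_of hLn h9 (by rw [hLS]; exact hd) ?_
    intro X _ hX
    have h1 := Finset.card_add_card_compl X
    have h2 := hcut X (by omega) (by omega)
    have h3 := dd_add hreg X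
    omega
  have hclaim : claimc (rowsL G L) = true := by
    rcases hcases with ⟨q1, q2, q3, q4, r1, r2, r3, r4, r5, r6⟩ | ⟨q1, q2, q3, q4, r1, r2, r3, r4, r5, r6⟩
    · have hs := search1_true
      unfold search1 at hs
      simp only [List.all_eq_true] at hs
      have h1 := hs _ (m1 d q4) _ (m2 a q1)
      have h2 := List.all_eq_true.1 (imp_true h1 (hdisj _ _ r3)) _ (m2 b q2)
      have h3 := List.all_eq_true.1 (imp_true h2 (hdisj _ _ r5)) _ (m2 c q3)
      have h4 := imp_true h3 (hdisj _ _ r6)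
      rw [hrows, r1, r2, r3, r4, r5, r6] at hcond ⊢
      exact imp_true h4 hcond
    · have hs := search2_true
      unfold search2 at hs
      simp only [List.all_eq_true] at hs
      have h1 := hs _ (m2 a q1) _ (m2 b q2) _ (m1 c q3)
      have h2 := imp_true (imp_true h1 (hdisj _ _ r2)) (hdisj _ _ r4)
      have h3 := List.all_eq_true.1 h2 _ (m1 d q4)
      have h4 := imp_true (imp_true h3 (hdisj _ _ r3)) (hdisj _ _ r5)
      rw [hrows, r1, r2, r3, r4, r5, r6] at hcond ⊢
      exact imp_true h4 hcond
  have := claimc_of hLn h9 hclaim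
  rw [hLS] at this
  exact this

end Label

section Final

variable {V : Type*} [Fintype V] [DecidableEq V] {G : SimpleGraph V} [DecidableRel G.Adj]

/-- image of a vertex set under an automorphism -/
def mp (φ : G ≃g G) (X : Finset V) : Finset V := X.map φ.toEquiv.toEmbedding

lemma mem_mp (φ : G ≃g G) (X : Finset V) (v : V) : φ v ∈ mp φ X ↔ v ∈ X := by
  unfold mp
  exact Finset.mem_map' φ.toEquiv.toEmbedding

lemma card_mp (φ : G ≃g G) (X : Finset V) : (mp φ X).card = X.card := Finset.card_map _

lemma dg_mp (φ : G ≃g G) (X : Finset V) (v : V) : dg G (mp φ X) (φ v) = dg G X v := by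
  unfold dg mp
  rw [Finset.sum_map]
  refine Finset.sum_congr rfl (fun u _ => ?_)
  have : G.Adj (φ v) (φ.toEquiv.toEmbedding u) ↔ G.Adj v u := φ.map_adj_iff
  simp only [this]

lemma ee_mp (φ : G ≃g G) (X Y : Finset V) : ee G (mp φ X) (mp φ Y) = ee G X Y := by
  unfold ee
  conv_lhs => arg 1; unfold mp
  rw [Finset.sum_map]
  exact Finset.sum_congr rfl (fun u _ => dg_mp φ Y u)

lemma dd_mp (hreg : G.IsRegularOfDegree 5) (φ : G ≃g G) (X : Finset V) :
    dd G (mp φ X) = dd G X := by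
  have h1 := dd_add hreg (mp φ X)
  have h2 := dd_add hreg X
  rw [ee_mp, card_mp] at h1
  omega

lemma exists_mp (φ : G ≃g G) {S K : Finset V} (h : K ⊆ mp φ S) : ∃ K' ⊆ S, K = mp φ K' := by
  unfold mp at h
  obtain ⟨K', h1, h2⟩ := Finset.subset_map_iff.1 h
  exact ⟨K', h1, h2⟩

lemma sdiff_mp (φ : G ≃g G) (X Y : Finset V) : mp φ X \ mp φ Y = mp φ (X \ Y) := by
  unfold mp; rw [Finset.map_sdiff]

lemma forall_mp (φ : G ≃g G) (X : Finset V) (P : V → Prop) :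
    (∀ v ∈ mp φ X, P v) ↔ ∀ v ∈ X, P (φ v) := by
  unfold mp
  rw [Finset.forall_mem_map]
  exact Iff.rfl

lemma big_mp (φ : G ≃g G) (S : Finset V) : big G (mp φ S) = mp φ (big G S) := by
  ext v
  obtain ⟨u, rfl⟩ := φ.surjective v
  rw [mem_mp, big, big, Finset.mem_filter, Finset.mem_filter, mem_mp, dg_mp]

lemma fullp_mp (φ : G ≃g G) (S K : Finset V) : fullp G (mp φ S) (mp φ K) ↔ fullp G S K := by
  unfold fullp
  rw [forall_mp]
  simp only [dg_mp]

lemma somep_mp (φ : G ≃g G) {S K : Finset V} (h : somep G S K) :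
    somep G (mp φ S) (mp φ K) := by
  obtain ⟨v, h1, h2, h3⟩ := h
  exact ⟨φ v, (mem_mp φ K v).2 h1, by rw [dg_mp]; exact h2, by rw [dg_mp]; exact h3⟩

lemma SpecN_mp (φ : G ≃g G) {S : Finset V} {h y : V} (hs : SpecN G S h y) :
    SpecN G (mp φ S) (φ h) (φ y) := by
  intro K hK h5 h12
  obtain ⟨K', hK', rfl⟩ := exists_mp φ hK
  rw [card_mp] at h5
  rw [ee_mp] at h12
  obtain ⟨a1, a2, a3⟩ := hs K' hK' h5 h12
  rw [mem_mp, mem_mp, fullp_mp, sdiff_mp, dg_mp]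
  exact ⟨somep_mp φ a1, a2, a3⟩

lemma SpecH_mp (φ : G ≃g G) {S : Finset V} {h y : V} (hs : SpecH G S h y) :
    SpecH G (mp φ S) (φ h) (φ y) := by
  intro K hK h5 h12
  obtain ⟨K', hK', rfl⟩ := exists_mp φ hK
  rw [card_mp] at h5
  rw [ee_mp] at h12
  obtain ⟨a1, a2⟩ := hs K' hK' h5 h12
  rw [mem_mp, mem_mp, fullp_mp, dg_mp, dg_mp]
  exact ⟨somep_mp φ a1, a2⟩

/-- a common five-set cannot be full in one of the two atoms -/
lemma not_full (hreg : G.IsRegularOfDegree 5) {S T : Finset V}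
    (h1 : fullp G S (S ∩ T)) (h2 : somep G T (S ∩ T)) : False := by
  obtain ⟨v, hv, hv2, hv4⟩ := h2
  have h3 := h1 v hv hv2
  have h4 := dg_inter_union (G := G) S T v
  have h5 := dg_le_five hreg (S ∪ T) v
  omega

lemma no_nine (hvt : VertexTransitive G) (hreg : G.IsRegularOfDegree 5) (htri : G.CliqueFree 3)
    (hcut : ∀ X : Finset V, 5 ≤ X.card → 5 ≤ Xᶜ.card → 13 ≤ dd G X)
    (hn : 18 ≤ Fintype.card V)
    (hmin : ∀ X : Finset V, dd G X = 13 → 6 ≤ X.card → 6 ≤ Xᶜ.card → 9 ≤ X.card)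
    {S : Finset V} (hS : S.card = 9) (dS : dd G S = 13) : False := by
  have heS : ee G S S = 32 := by
    have := dd_add hreg S
    omega
  have hcc := Finset.card_add_card_compl S
  have hd : ∀ v ∈ S, 3 ≤ dg G S v := fun v hv =>
    dg_ge_three hreg hcut dS (by omega) (by omega) hv
  have hK : ∃ K ⊆ S, K.card = 5 ∧ ee G K K = 12 := by
    have h1 : ∃ x ∈ S, ∃ y ∈ S, dg G S x ≠ dg G S y := by
      by_contra! h
      have hne : S.Nonempty := Finset.card_pos.1 (by omega)
      obtain ⟨x, hx⟩ := hne
      have : ee G S S = ∑ _v ∈ S, dg G S x := Finset.sum_congr rfl (fun v hv => h v hv x hx)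
      rw [Finset.sum_const, hS, smul_eq_mul] at this
      omega
    obtain ⟨x, hx, y, hy, hxy⟩ := h1
    obtain ⟨φ, hφ⟩ := hvt x y
    have hyT : y ∈ mp φ S := by rw [← hφ, mem_mp]; exact hx
    have hne : S ≠ mp φ S := by
      intro h
      apply hxy
      rw [← dg_mp φ S x, ← h, hφ]
    rcases pair_lemma hreg hcut hn hmin hS ((card_mp φ S).trans hS) dS
      ((dd_mp hreg φ S).trans dS) hne ⟨y, Finset.mem_inter.2 ⟨hy, hyT⟩⟩ with
      ⟨h1, h2⟩ | ⟨_, h1, _, h2, _⟩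
    · exact ⟨_, Finset.inter_subset_left, h1, h2⟩
    · exact ⟨_, Finset.sdiff_subset, h1, h2⟩
  obtain ⟨K, hKS, hK5, hK12⟩ := hK
  obtain ⟨h, hh, y, hy, d1, d2, hb, hspec⟩ :=
    structure_lemma hreg htri hcut hn hS heS hd hKS hK5 hK12
  obtain ⟨φ, hφ⟩ := hvt h y
  have hyT : y ∈ mp φ S := by rw [← hφ, mem_mp]; exact hh
  have hyI : y ∈ S ∩ mp φ S := Finset.mem_inter.2 ⟨hy, hyT⟩
  have hne : S ≠ mp φ S := by
    intro he
    apply hb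
    rw [← dg_mp φ (big G S) h, ← big_mp, ← he, hφ]
  have dTy : dg G (mp φ S) y = 4 := by rw [← hφ, dg_mp, d1]
  rcases pair_lemma hreg hcut hn hmin hS ((card_mp φ S).trans hS) dS
      ((dd_mp hreg φ S).trans dS) hne ⟨y, hyI⟩ with
      ⟨c5, c12⟩ | ⟨c4, c5, c5', c12, c12', hv⟩
  · rcases hspec with hs | hs
    · have hsT := SpecN_mp φ hs
      rw [hφ] at hsT
      have a1 := (hs _ Finset.inter_subset_left c5 c12).1
      have a2 := (hsT _ Finset.inter_subset_right c5 c12).2.1 hyI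
      rw [Finset.inter_comm] at a1 a2
      exact not_full hreg a2 a1
    · have hsT := SpecH_mp φ hs
      rw [hφ] at hsT
      obtain ⟨a1, a2, a3, a4⟩ := hs _ Finset.inter_subset_left c5 c12
      obtain ⟨b1, b2, b3, b4⟩ := hsT _ Finset.inter_subset_right c5 c12
      rcases a4 with a4 | a4 | a4
      · exact a4 hyI
      · rcases a3 with a3 | a3
        · exact a3 a4
        · exact not_full hreg a3 b1
      · rcases b3 with b3 | b3
        · exact b3 a4
        · rw [Finset.inter_comm] at a1 b3
          exact not_full hreg b3 a1
  · rcases hspec with hs | hs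
    · have e1 := hv y hyI
      rcases (hs _ Finset.sdiff_subset c5 c12).2.2 with a | a
      · exact (Finset.mem_sdiff.1 a).2 hyT
      · rw [sdiff_sdiff_right_self] at a
        apply a
        change dg G (S ∩ mp φ S) y = 3
        omega
    · have hsT := SpecH_mp φ hs
      rw [hφ] at hsT
      have := (hsT _ Finset.sdiff_subset c5' c12').2.1
      exact (Finset.mem_sdiff.1 this).2 hy

end Final

/-- (Lemma 3.6) `G` connected vertex-transitive non-bipartite
triangle-free of degree 5 and even order, not 4-factor-critical, with
`λ₅(G) = λ₆(G) = 13`. Then every `λ₆`-atom `S` of `G` satisfies `|S| ≥ 11`. -/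
theorem statement14 {V : Type*} [Fintype V] [DecidableEq V]
    (G : SimpleGraph V) [DecidableRel G.Adj]
    (hconn : G.Connected) (hvt : VertexTransitive G) (hnb : ¬ G.Colorable 2)
    (htri : G.CliqueFree 3) (hreg : G.IsRegularOfDegree 5)
    (heven : Even (Fintype.card V)) (hnfc : ¬ PFactorCritical G 4)
    (h5 : lambdaS G 5 = 13) (h6 : lambdaS G 6 = 13)
    (S : Set V) (hS : IsLambdaAtom G 6 S) :
    11 ≤ S.ncard := by
  obtain ⟨S, rfl⟩ : ∃ T : Finset V, (T : Set V) = S := ⟨S.toFinite.toFinset, by simp⟩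
  obtain ⟨hfrag, hatom⟩ := hS
  rw [Set.ncard_coe_finset] at hatom ⊢
  have hcut : ∀ X : Finset V, 5 ≤ X.card → 5 ≤ Xᶜ.card → 13 ≤ dd G X :=
    fun X => cut_ge hreg h5 _ X rfl
  have hfc : IsLambdaFragment G 6 ((Sᶜ : Finset V) : Set V) := by
    unfold IsLambdaFragment at hfrag ⊢
    rw [Finset.coe_compl, edgeBoundary_compl]
    exact hfrag
  have c1 := frag_card hconn S hfrag
  have c2 := frag_card hconn Sᶜ hfc
  have c3 := hatom _ hfc
  rw [Set.ncard_coe_finset] at c3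
  have dS : dd G S = 13 := by
    rw [← edgeBoundary_ncard, hfrag.2, h6]
  have c4 := Finset.card_add_card_compl S
  have hee := dd_add hreg S
  obtain ⟨m, hm⟩ := ee_even G S
  by_contra hlt
  have hcase : S.card = 7 ∨ S.card = 9 := by omega
  rcases hcase with h | h
  · exact no_seven htri h (by omega) (fun v hv => dg_ge_three hreg hcut dS c1 (by omega) hv)
  · refine no_nine hvt hreg htri hcut (by omega) ?_ h dS
    intro X hX h1 h2
    have := hatom _ (frag_of hreg hcut h6 X hX h1 h2)
    rw [Set.ncard_coe_finset] at this
    omega
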